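/- arXiv:1811.00049 — 2 statements merged into one kernel-verified Lean document; each statement's English description precedes it below -/
import Mathlib

section
/- Let h be even and let w be a divisor of q+1. Let L̄ ≤ M_ℓ be a subgroup such that |L̄ ∩ Z| = w and L̄ is the internal direct product of L̄ ∩ Z and a subgroup S isomorphic to the alternating group A₅. Then the number N of orbits of L̄ acting on O is as follows: if 5 | q−1, then N = 2 + (q−16)/60 + (q/4)·((q−1)/15)·((q+1)/w); if 5 | q+1 and 5 ∤ w, then N = 1 + (q−4)/60 + (q/4)·((q−1)/3)·((q+1)/(5w)); if 5 | w, then N = 1 + (q−4)/60 + ((q+1)/w)·(1 + (q²−q−12)/60). -/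
open Matrix

noncomputable def glAct {F : Type*} [Field F] (M : GL (Fin 3) F)
    (x : Projectivization F (Fin 3 → F)) : Projectivization F (Fin 3 → F) :=
  Projectivization.map
    ((LinearMap.GeneralLinearGroup.generalLinearEquiv F (Fin 3 → F)
        (Matrix.GeneralLinearGroup.toLin M)).toLinearMap)
    ((LinearMap.GeneralLinearGroup.generalLinearEquiv F (Fin 3 → F)
        (Matrix.GeneralLinearGroup.toLin M)).injective) x

noncomputable def numOrbits {F : Type*} [Field F] (L : Subgroup (GL (Fin 3) F))
    (O : Set (Projectivization F (Fin 3 → F))) : ℕ :=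
  Nat.card ((fun x => {y | ∃ g ∈ L, glAct g x = y}) '' O :
    Set (Set (Projectivization F (Fin 3 → F))))

def hermitianPts (q : ℕ) (F : Type*) [Field F] : Set (Projectivization F (Fin 3 → F)) :=
  {x | x.rep 1 ^ (q + 1) = x.rep 0 ^ (q + 1) - x.rep 2 ^ (q + 1)}

def MlSet (q : ℕ) (F : Type*) [Field F] : Set (GL (Fin 3) F) :=
  {M | ∃ a c τ : F, a ^ (q + 1) - c ^ (q + 1) = 1 ∧ τ ^ (q + 1) = 1 ∧
    (M : Matrix (Fin 3) (Fin 3) F) = !![a, τ * c ^ q, 0; c, τ * a ^ q, 0; 0, 0, 1]}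

def ZSet (q : ℕ) (F : Type*) [Field F] : Set (GL (Fin 3) F) :=
  {M | ∃ ε : F, ε ^ (q + 1) = 1 ∧ (M : Matrix (Fin 3) (Fin 3) F) = Matrix.diagonal ![ε, ε, 1]}

/-!
Since `A₅` is perfect, `S` lies in the special unitary group of the form `x x̄ - y ȳ`, where
`x̄ = x ^ q`, and `L` consists of the matrices `ε A ⊕ 1` with `A` in a copy `T` of `A₅` and `ε` in a
group `E` of `w` scalars of norm one. By Burnside's lemma it suffices to count the pairs of an
element `(A, ε)` of `T × E` and a point of the curve fixed by it.

A fixed point at infinity is an isotropic eigenline of `A`, and a fixed point `(x : y : 1)` is an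
eigenvector of norm one with eigenvalue `ε⁻¹`. An element of order 2 is unipotent and has exactly
one eigenline, which is isotropic. An element of prime order `r ∈ {3, 5}` has two eigenvalues, both
of order `r`; its eigenvectors are isotropic if `r` divides `q - 1` and anisotropic if `r` divides
`q + 1`, so that its contribution depends only on whether `r` divides `q - 1` and `w`.
-/

open scoped MatrixGroups

section FiniteField

lemma card_sub_one_of_card_eq_sq {F : Type*} {q : ℕ} (hF : Nat.card F = q ^ 2) :
    Nat.card F - 1 = (q + 1) * (q - 1) := by
  simpa [hF] using Nat.sq_sub_sq q 1

lemma mem_rootsOfUnity_sub_one_iff {F : Type*} [Field F] {q : ℕ} (hq : 0 < q) {u : Fˣ} :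
    u ∈ rootsOfUnity (q - 1) F ↔ (u : F) ^ q = u := by
  obtain ⟨m, rfl⟩ : ∃ m, q = m + 1 := ⟨q - 1, by omega⟩
  rw [mem_rootsOfUnity', Nat.add_sub_cancel, pow_succ, mul_eq_right₀ u.ne_zero]

variable {F : Type*} [Field F] [Finite F] {q : ℕ}

lemma pow_pow_of_card_eq_sq (hF : Nat.card F = q ^ 2) (x : F) : (x ^ q) ^ q = x := by
  have := Fintype.ofFinite F
  rw [← pow_mul, ← sq, ← hF, Nat.card_eq_fintype_card, FiniteField.pow_card]

lemma exists_ringHom_eq_pow (hF : Nat.card F = q ^ 2) : ∃ σ : F →+* F, ∀ x, σ x = x ^ q := by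
  have := Fintype.ofFinite F
  obtain ⟨p, hp, n, hprime, hcard⟩ := FiniteField.card' F
  rw [← Nat.card_eq_fintype_card, hF] at hcard
  obtain ⟨m, -, rfl⟩ := (Nat.dvd_prime_pow hprime).1 (hcard ▸ dvd_pow_self q two_ne_zero)
  have := Fact.mk hprime
  exact ⟨iterateFrobenius F p m, fun x => iterateFrobenius_def p m x⟩

lemma add_pow_of_card_eq_sq (hF : Nat.card F = q ^ 2) (x y : F) :
    (x + y) ^ q = x ^ q + y ^ q := by
  obtain ⟨σ, hσ⟩ := exists_ringHom_eq_pow hF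
  simpa only [hσ] using map_add σ x y

lemma sub_pow_of_card_eq_sq (hF : Nat.card F = q ^ 2) (x y : F) :
    (x - y) ^ q = x ^ q - y ^ q := by
  obtain ⟨σ, hσ⟩ := exists_ringHom_eq_pow hF
  simpa only [hσ] using map_sub σ x y

lemma one_lt_of_card_eq_sq (hF : Nat.card F = q ^ 2) : 1 < q := by
  have := Finite.one_lt_card (α := F)
  by_contra! h
  interval_cases q <;> simp_all

lemma natCard_rootsOfUnity_of_dvd {k : ℕ} (hk : k ∣ Nat.card F - 1) :
    Nat.card (rootsOfUnity k F) = k := by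
  have h := IsCyclic.card_powMonoidHom_ker Fˣ k
  rwa [Nat.card_units, Nat.gcd_eq_right hk] at h

lemma natCard_rootsOfUnity_add_one (hF : Nat.card F = q ^ 2) :
    Nat.card (rootsOfUnity (q + 1) F) = q + 1 :=
  natCard_rootsOfUnity_of_dvd (card_sub_one_of_card_eq_sq hF ▸ dvd_mul_right _ _)

lemma natCard_rootsOfUnity_sub_one (hF : Nat.card F = q ^ 2) :
    Nat.card (rootsOfUnity (q - 1) F) = q - 1 :=
  natCard_rootsOfUnity_of_dvd (card_sub_one_of_card_eq_sq hF ▸ dvd_mul_left _ _)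

lemma ncard_pow_eq_one (hF : Nat.card F = q ^ 2) : {x : F | x ^ (q + 1) = 1}.ncard = q + 1 := by
  have himage : {x : F | x ^ (q + 1) = 1} = Units.val '' (rootsOfUnity (q + 1) F : Set Fˣ) := by
    ext x
    constructor
    · intro hx
      exact ⟨Units.ofPowEqOne x (q + 1) hx q.succ_ne_zero, by simp, rfl⟩
    · rintro ⟨u, hu, rfl⟩
      exact (mem_rootsOfUnity' _ _).1 hu
  rw [himage, Set.ncard_image_of_injective _ Units.val_injective]
  exact natCard_rootsOfUnity_add_one hF

lemma exists_pow_eq (hF : Nat.card F = q ^ 2) {c : F} (hc : c ≠ 0) (hcq : c ^ q = c) :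
    ∃ x : F, x ≠ 0 ∧ x ^ (q + 1) = c := by
  have hq := one_lt_of_card_eq_sq hF
  have hle : (powMonoidHom (q + 1) : Fˣ →* Fˣ).range ≤ rootsOfUnity (q - 1) F := by
    rintro _ ⟨x, rfl⟩
    rw [mem_rootsOfUnity, powMonoidHom_apply, ← pow_mul, ← card_sub_one_of_card_eq_sq hF,
      ← Nat.card_units, pow_card_eq_one']
  have hcard : Nat.card (powMonoidHom (q + 1) : Fˣ →* Fˣ).range = q - 1 := by
    have hker : Nat.card (powMonoidHom (q + 1) : Fˣ →* Fˣ).ker = q + 1 :=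
      natCard_rootsOfUnity_add_one hF
    have h := Subgroup.card_mul_index (powMonoidHom (q + 1) : Fˣ →* Fˣ).ker
    rw [Subgroup.index_ker, hker, Nat.card_units, card_sub_one_of_card_eq_sq hF] at h
    exact Nat.eq_of_mul_eq_mul_left q.succ_pos h
  have heq := Subgroup.eq_of_le_of_card_ge hle (by
    rw [hcard, natCard_rootsOfUnity_sub_one hF])
  have hmem : Units.mk0 c hc ∈ rootsOfUnity (q - 1) F :=
    (mem_rootsOfUnity_sub_one_iff (by omega)).2 hcq
  obtain ⟨x, hx⟩ := heq ▸ hmem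
  exact ⟨x, x.ne_zero, by simpa using congrArg Units.val hx⟩

lemma ncard_pow_eq (hF : Nat.card F = q ^ 2) {c : F} (hc : c ≠ 0) (hcq : c ^ q = c) :
    {x : F | x ^ (q + 1) = c}.ncard = q + 1 := by
  obtain ⟨y, hy, rfl⟩ := exists_pow_eq hF hc hcq
  have himage : {x : F | x ^ (q + 1) = y ^ (q + 1)} = (· * y) '' {x : F | x ^ (q + 1) = 1} := by
    ext x
    constructor
    · intro hx
      exact ⟨x / y, by simp [div_pow, Set.mem_ofPred_eq ▸ hx, hy], by simp [hy]⟩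
    · rintro ⟨z, hz, rfl⟩
      simp [mul_pow, Set.mem_ofPred_eq ▸ hz]
  rw [himage, Set.ncard_image_of_injective _ (mul_left_injective₀ hy), ncard_pow_eq_one hF]

end FiniteField

section Eigenvalues

variable {F : Type*} [Field F]

section General

variable {n : Type*} [Fintype n] [DecidableEq n] {A : Matrix n n F} {u : F} {r : ℕ}

lemma isRoot_charpoly_iff_exists_mulVec_eq_smul :
    A.charpoly.IsRoot u ↔ ∃ v ≠ 0, A *ᵥ v = u • v := by
  rw [Polynomial.IsRoot, Matrix.eval_charpoly, ← Matrix.exists_mulVec_eq_zero_iff]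
  simp only [Matrix.sub_mulVec, Matrix.scalar_apply, ← Matrix.smul_one_eq_diagonal,
    Matrix.smul_mulVec, Matrix.one_mulVec, sub_eq_zero, eq_comm]

lemma pow_eq_one_of_isRoot_charpoly (hA : A ^ r = 1) (hu : A.charpoly.IsRoot u) : u ^ r = 1 := by
  have : Nontrivial (Matrix n n F) := by
    obtain ⟨v, hv, -⟩ := isRoot_charpoly_iff_exists_mulVec_eq_smul.1 hu
    obtain ⟨i, -⟩ := Function.ne_iff.1 hv
    have := Nonempty.intro i
    infer_instance
  have h := spectrum.pow_mem_pow A r (Matrix.mem_spectrum_iff_isRoot_charpoly.2 hu)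
  rwa [hA, spectrum.one_eq, Set.mem_singleton_iff] at h

lemma exists_isRoot_charpoly_of_pow_eq_one [Nonempty n] {z : F} (hz : IsPrimitiveRoot z r)
    (hr : 0 < r) (hA : A ^ r = 1) : ∃ u, A.charpoly.IsRoot u := by
  have hint := Matrix.isIntegral A
  have hdvd : minpoly F A ∣ Polynomial.X ^ r - 1 := minpoly.dvd F A (by simp [hA])
  have hsplits := (Polynomial.X_pow_sub_one_splits hz).of_dvd
    (Polynomial.X_pow_sub_C_ne_zero hr 1) hdvd
  obtain ⟨u, hu⟩ := hsplits.exists_eval_eq_zero (minpoly.degree_pos hint).ne'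
  exact ⟨u, Polynomial.IsRoot.dvd hu (Matrix.minpoly_dvd_charpoly A)⟩

lemma eq_one_of_pow_eq_one_of_charpoly_eq {k : ℕ} (hr : (r : F) ≠ 0) (hA : A ^ r = 1)
    (hchar : A.charpoly = (Polynomial.X - 1) ^ k) : A = 1 := by
  have hdvd : minpoly F A ∣ Polynomial.X ^ r - 1 := minpoly.dvd F A (by simp [hA])
  have hsep : (Polynomial.X ^ r - 1 : Polynomial F).Separable :=
    Polynomial.separable_X_pow_sub_C 1 hr one_ne_zero
  have hminpoly : minpoly F A ∣ Polynomial.X - 1 :=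
    (hsep.squarefree.squarefree_of_dvd hdvd).isRadical k _
      (hchar ▸ Matrix.minpoly_dvd_charpoly A)
  have haeval := (minpoly.dvd_iff).1 hminpoly
  simpa [sub_eq_zero] using haeval

lemma isRoot_charpoly_iff_eq_one_of_pow_char [Nonempty n] {p : ℕ} [Fact p.Prime] [CharP F p]
    (hA : A ^ p = 1) : A.charpoly.IsRoot u ↔ u = 1 := by
  have hp := (Fact.out : p.Prime).ne_zero
  constructor
  · intro hu
    have h : (u - 1) ^ p = 0 := by
      rw [sub_pow_char, pow_eq_one_of_isRoot_charpoly hA hu, one_pow, sub_self]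
    exact sub_eq_zero.1 (pow_eq_zero_iff hp |>.1 h)
  · rintro rfl
    have h : (1 - A) ^ p = 0 := by
      rw [sub_pow_char_of_commute p (Commute.one_left A), hA, one_pow, sub_self]
    have hdet : (1 - A).det ^ p = 0 := by rw [← Matrix.det_pow, h, Matrix.det_zero]
    rw [Polynomial.IsRoot, Matrix.eval_charpoly, map_one]
    exact pow_eq_zero_iff hp |>.1 hdet

end General

section SpecialLinear

variable {A : SL(2, F)} {u v : F} {r : ℕ}

lemma coe_pow_eq_one (hA : A ^ r = 1) : A.1 ^ r = 1 := by
  rw [← Matrix.SpecialLinearGroup.coe_pow, hA, Matrix.SpecialLinearGroup.coe_one]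

lemma isRoot_charpoly_iff : A.1.charpoly.IsRoot u ↔ u ^ 2 - A.1.trace * u + 1 = 0 := by
  simp [Polynomial.IsRoot, Matrix.charpoly_fin_two]

lemma eq_or_eq_inv_of_isRoot_charpoly
    (hu : A.1.charpoly.IsRoot u) (hv : A.1.charpoly.IsRoot v) :
    v = u ∨ v = u⁻¹ := by
  rw [isRoot_charpoly_iff] at hu hv
  have h : (v - u) * (v * u - 1) = 0 := by linear_combination u * hv - v * hu
  refine (mul_eq_zero.1 h).imp sub_eq_zero.1 fun h => eq_inv_of_mul_eq_one_left ?_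
  exact sub_eq_zero.1 h

lemma ne_zero_of_isRoot_charpoly (hu : A.1.charpoly.IsRoot u) : u ≠ 0 := by
  rintro rfl
  have h := isRoot_charpoly_iff.1 hu
  simp at h

lemma isRoot_charpoly_inv (hu : A.1.charpoly.IsRoot u) : A.1.charpoly.IsRoot u⁻¹ := by
  have hu0 := ne_zero_of_isRoot_charpoly hu
  rw [isRoot_charpoly_iff] at hu ⊢
  field_simp
  linear_combination hu

lemma ne_one_of_isRoot_charpoly (hr : (r : F) ≠ 0) (hA : A ^ r = 1) (hne : A ≠ 1)
    (hu : A.1.charpoly.IsRoot u) : u ≠ 1 := by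
  rintro rfl
  have htrace := isRoot_charpoly_iff.1 hu
  have hchar : A.1.charpoly = (Polynomial.X - 1) ^ 2 := by
    have h2 : A.1.trace = 2 := by linear_combination -htrace
    rw [Matrix.charpoly_fin_two, h2, A.det_coe, Polynomial.C_ofNat, Polynomial.C_1]
    ring
  exact hne (Subtype.ext (eq_one_of_pow_eq_one_of_charpoly_eq hr (coe_pow_eq_one hA) hchar))

lemma mem_center_of_eq_smul_one (h : A.1 = u • 1) : A ∈ Subgroup.center SL(2, F) := by
  have hdet := A.det_coe
  rw [h, Matrix.det_smul, Matrix.det_one, mul_one] at hdet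
  exact Matrix.SpecialLinearGroup.mem_center_iff.2
    ⟨u, hdet, by rw [h, Matrix.scalar_apply, Matrix.smul_one_eq_diagonal]⟩

lemma notMem_center_of_pow_char {p : ℕ} [Fact p.Prime] [CharP F p] (hA : A ^ p = 1)
    (hne : A ≠ 1) : A ∉ Subgroup.center SL(2, F) := by
  intro hcenter
  obtain ⟨c, -, hc⟩ := Matrix.SpecialLinearGroup.mem_center_iff.1 hcenter
  have hroot : A.1.charpoly.IsRoot c := by
    simp [Polynomial.IsRoot, Matrix.eval_charpoly, hc]
  obtain rfl := (isRoot_charpoly_iff_eq_one_of_pow_char (coe_pow_eq_one hA)).1 hroot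
  exact hne (Subtype.ext (by simpa using hc.symm))

lemma notMem_center_of_odd_orderOf (hodd : Odd (orderOf A)) (hne : A ≠ 1) :
    A ∉ Subgroup.center SL(2, F) := by
  intro hcenter
  obtain ⟨c, hc2, hc⟩ := Matrix.SpecialLinearGroup.mem_center_iff.1 hcenter
  have hA : A ^ 2 = 1 := Subtype.ext (by
    rw [Fintype.card_fin] at hc2
    rw [Matrix.SpecialLinearGroup.coe_pow, ← hc, ← map_pow, hc2, map_one,
      Matrix.SpecialLinearGroup.coe_one])
  have hdvd := orderOf_dvd_of_pow_eq_one hA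
  have h1 : orderOf A = 1 := Nat.Coprime.eq_one_of_dvd hodd.coprime_two_right hdvd
  exact hne (orderOf_eq_one_iff.1 h1)

lemma sq_ne_one_of_isRoot_charpoly (hr : (orderOf A : F) ≠ 0) (hodd : Odd (orderOf A))
    (hne : A ≠ 1) (hu : A.1.charpoly.IsRoot u) : u ^ 2 ≠ 1 := by
  intro hu2
  have hur : u ^ orderOf A = 1 :=
    pow_eq_one_of_isRoot_charpoly (coe_pow_eq_one (pow_orderOf_eq_one A)) hu
  have hgcd := pow_gcd_eq_one.2 ⟨hur, hu2⟩
  rw [hodd.coprime_two_right, pow_one] at hgcd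
  exact ne_one_of_isRoot_charpoly hr (pow_orderOf_eq_one A) hne hu hgcd

/-- The eigenvalues of `A` lying in the subgroup `K` of `Fˣ`. -/
def eigenvaluesIn (K : Subgroup Fˣ) (A : SL(2, F)) : Set Fˣ :=
  {u | u ∈ K ∧ A.1.charpoly.IsRoot u}

lemma eigenvaluesIn_of_pow_char {p : ℕ} [Fact p.Prime] [CharP F p] (K : Subgroup Fˣ)
    (hA : A ^ p = 1) : eigenvaluesIn K A = {1} := by
  ext u
  rw [eigenvaluesIn, Set.mem_ofPred_eq, isRoot_charpoly_iff_eq_one_of_pow_char (coe_pow_eq_one hA),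
    Units.val_eq_one, Set.mem_singleton_iff, and_iff_right_of_imp]
  rintro rfl
  exact K.one_mem

lemma dvd_natCard_of_mem_eigenvaluesIn (hprime : (orderOf A).Prime) (hr : (orderOf A : F) ≠ 0)
    {K : Subgroup Fˣ} {u : Fˣ} (hu : u ∈ eigenvaluesIn K A) : orderOf A ∣ Nat.card K := by
  have hA := coe_pow_eq_one (pow_orderOf_eq_one A)
  have hne : A ≠ 1 := fun h => hprime.ne_one (orderOf_eq_one_iff.2 h)
  have := Fact.mk hprime
  have horder : orderOf u = orderOf A := by
    refine orderOf_eq_prime (Units.ext ?_) fun h => ?_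
    · simpa using pow_eq_one_of_isRoot_charpoly hA hu.2
    · exact ne_one_of_isRoot_charpoly hr (pow_orderOf_eq_one A) hne hu.2 (by rw [h, Units.val_one])
  exact horder ▸ Subgroup.orderOf_dvd_natCard K hu.1

lemma eigenvaluesIn_nonempty (hprime : (orderOf A).Prime) {K : Subgroup Fˣ} [Finite K]
    (hdvd : orderOf A ∣ Nat.card K) : (eigenvaluesIn K A).Nonempty := by
  have hA := coe_pow_eq_one (pow_orderOf_eq_one A)
  have := Fact.mk hprime
  obtain ⟨z, hz⟩ := exists_prime_orderOf_dvd_card' _ hdvd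
  have hprim : IsPrimitiveRoot ((z : Fˣ) : F) (orderOf A) := by
    rw [IsPrimitiveRoot.coe_units_iff, IsPrimitiveRoot.coe_submonoidClass_iff, ← hz]
    exact IsPrimitiveRoot.orderOf z
  obtain ⟨u, hu⟩ := exists_isRoot_charpoly_of_pow_eq_one hprim hprime.pos hA
  have := NeZero.mk hprime.ne_zero
  obtain ⟨i, -, hi⟩ := hprim.eq_pow_of_pow_eq_one (pow_eq_one_of_isRoot_charpoly hA hu)
  exact ⟨(z : Fˣ) ^ i, K.pow_mem z.2 i, by rwa [Units.val_pow_eq_pow_val, hi]⟩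

lemma ncard_eigenvaluesIn (hprime : (orderOf A).Prime) (hodd : Odd (orderOf A))
    (hr : (orderOf A : F) ≠ 0) (K : Subgroup Fˣ) [Finite K] :
    (eigenvaluesIn K A).ncard = if orderOf A ∣ Nat.card K then 2 else 0 := by
  have hne : A ≠ 1 := fun h => hprime.ne_one (orderOf_eq_one_iff.2 h)
  split_ifs with hdvd
  · obtain ⟨u, hu⟩ := eigenvaluesIn_nonempty hprime hdvd
    have hpair : eigenvaluesIn K A = {u, u⁻¹} := by
      ext v
      constructor
      · intro hv
        simpa [Units.ext_iff] using eq_or_eq_inv_of_isRoot_charpoly hu.2 hv.2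
      · rintro (rfl | rfl)
        · exact hu
        · exact ⟨K.inv_mem hu.1, by simpa using isRoot_charpoly_inv hu.2⟩
    rw [hpair, Set.ncard_pair]
    intro h
    refine sq_ne_one_of_isRoot_charpoly hr hodd hne hu.2 ?_
    rw [← Units.val_pow_eq_pow_val, sq, eq_inv_iff_mul_eq_one.1 h, Units.val_one]
  · have hempty : eigenvaluesIn K A = ∅ := Set.eq_empty_iff_forall_notMem.2 fun u hu =>
      hdvd (dvd_natCard_of_mem_eigenvaluesIn hprime hr hu)
    rw [hempty, Set.ncard_empty]

end SpecialLinear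

end Eigenvalues

section HermitianForm

variable {F : Type*} [Field F] {q : ℕ}

/-- The Hermitian form `x x̄ - y ȳ` of a vector `(x, y)`, where `x̄ = x ^ q` is the conjugation of
the field with `q ^ 2` elements. -/
def hermNorm (q : ℕ) (v : Fin 2 → F) : F :=
  v 0 ^ (q + 1) - v 1 ^ (q + 1)

/-- The matrices `[[a, c̄], [c, ā]]` of determinant one, where `x̄ = x ^ q`: the special unitary
group of the form `hermNorm q`. -/
structure IsSpecialUnitary (q : ℕ) (A : SL(2, F)) : Prop where
  apply_zero_one : A 0 1 = A 1 0 ^ q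
  apply_one_one : A 1 1 = A 0 0 ^ q

/-- The isotropic eigenlines of `A`. The isotropic lines are those spanned by `(1, t)` with
`t ^ (q + 1) = 1`, and such a line is encoded by `t`. -/
def isotropicEigenlines (q : ℕ) (A : SL(2, F)) : Set F :=
  {t | t ^ (q + 1) = 1 ∧ ∃ u : F, A.1 *ᵥ ![1, t] = u • ![1, t]}

/-- The vectors `v` with `hermNorm q v = 1` and `A v = u v`. -/
def normOneEigenvectors (q : ℕ) (A : SL(2, F)) (u : F) : Set (Fin 2 → F) :=
  {v | hermNorm q v = 1 ∧ A.1 *ᵥ v = u • v}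

lemma mulVec_eq_smul_iff {A : Matrix (Fin 2) (Fin 2) F} {v : Fin 2 → F} {u : F} :
    A *ᵥ v = u • v ↔
      A 0 0 * v 0 + A 0 1 * v 1 = u * v 0 ∧ A 1 0 * v 0 + A 1 1 * v 1 = u * v 1 := by
  simp [funext_iff, Fin.forall_fin_two]

lemma exists_eq_smul_of_mul_eq_mul {v w : Fin 2 → F} (hv : v ≠ 0) (h : v 0 * w 1 = v 1 * w 0) :
    ∃ k : F, w = k • v := by
  by_cases h0 : v 0 = 0
  · have h1 : v 1 ≠ 0 := fun h1 => hv (by ext i; fin_cases i <;> assumption)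
    refine ⟨w 1 / v 1, ?_⟩
    ext i
    fin_cases i
    · simpa [h0, h1] using h
    · simp [h1]
  · refine ⟨w 0 / v 0, ?_⟩
    ext i
    fin_cases i
    · simp [h0]
    · simp only [Fin.mk_one, Pi.smul_apply, smul_eq_mul]
      field_simp
      linear_combination h

lemma eq_smul_one_of_mulVec_eq_smul {A : Matrix (Fin 2) (Fin 2) F} {v w : Fin 2 → F} {u : F}
    (hvw : v 0 * w 1 ≠ v 1 * w 0) (hv : A *ᵥ v = u • v) (hw : A *ᵥ w = u • w) : A = u • 1 := by
  have hB : IsUnit !![v 0, w 0; v 1, w 1] := by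
    rw [Matrix.isUnit_iff_isUnit_det, Matrix.det_fin_two_of, isUnit_iff_ne_zero, sub_ne_zero,
      mul_comm (w 0)]
    exact hvw
  rw [mulVec_eq_smul_iff] at hv hw
  refine hB.mul_right_cancel ?_
  ext i j
  fin_cases i <;> fin_cases j <;> simp [Matrix.mul_apply, hv, hw]

lemma exists_eq_smul_of_mulVec_eq_smul {A : SL(2, F)} {v w : Fin 2 → F} {u : F}
    (hA : A ∉ Subgroup.center SL(2, F)) (hv0 : v ≠ 0) (hv : A.1 *ᵥ v = u • v)
    (hw : A.1 *ᵥ w = u • w) : ∃ k : F, w = k • v :=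
  exists_eq_smul_of_mul_eq_mul hv0 <| of_not_not fun hvw =>
    hA (mem_center_of_eq_smul_one (eq_smul_one_of_mulVec_eq_smul hvw hv hw))

lemma hermNorm_smul (k : F) (v : Fin 2 → F) :
    hermNorm q (k • v) = k ^ (q + 1) * hermNorm q v := by
  simp only [hermNorm, Pi.smul_apply, smul_eq_mul, mul_pow, mul_sub]

lemma hermNorm_one_vec (t : F) : hermNorm q ![1, t] = 1 - t ^ (q + 1) := by
  simp [hermNorm]

lemma ne_zero_of_hermNorm_ne_zero {v : Fin 2 → F} (hv : hermNorm q v ≠ 0) : v ≠ 0 := by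
  rintro rfl
  simp [hermNorm] at hv

lemma apply_ne_zero_of_hermNorm_eq_zero {v : Fin 2 → F} (hv0 : v ≠ 0) (hv : hermNorm q v = 0)
    (i : Fin 2) : v i ≠ 0 := by
  have hiff : v 0 = 0 ↔ v 1 = 0 := by
    rw [← pow_eq_zero_iff q.succ_ne_zero, sub_eq_zero.1 hv, pow_eq_zero_iff q.succ_ne_zero]
  intro hi
  apply hv0
  ext j
  fin_cases i <;> fin_cases j <;> simp_all

lemma normOneEigenvectors_eq_image {A : SL(2, F)} {u : F} {v : Fin 2 → F}
    (hcenter : A ∉ Subgroup.center SL(2, F)) (hv : hermNorm q v ≠ 0)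
    (hAv : A.1 *ᵥ v = u • v) :
    normOneEigenvectors q A u = (· • v) '' {k : F | k ^ (q + 1) = (hermNorm q v)⁻¹} := by
  ext w
  constructor
  · rintro ⟨hw, hAw⟩
    obtain ⟨k, rfl⟩ :=
      exists_eq_smul_of_mulVec_eq_smul hcenter (ne_zero_of_hermNorm_ne_zero hv) hAv hAw
    exact ⟨k, eq_inv_of_mul_eq_one_left (by rwa [hermNorm_smul] at hw), rfl⟩
  · rintro ⟨k, hk, rfl⟩
    rw [Set.mem_ofPred_eq] at hk
    refine ⟨?_, by rw [Matrix.mulVec_smul, hAv, smul_comm]⟩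
    rw [hermNorm_smul, hk, inv_mul_cancel₀ hv]

lemma ncard_normOneEigenvectors_one (u : F) [Decidable (u = 1)] :
    (normOneEigenvectors q (1 : SL(2, F)) u).ncard =
      if u = 1 then {v : Fin 2 → F | hermNorm q v = 1}.ncard else 0 := by
  split_ifs with hu
  · congr 1
    exact Set.ext fun v => and_iff_left (by simp [hu])
  · have hempty : normOneEigenvectors q (1 : SL(2, F)) u = ∅ := by
      refine Set.eq_empty_iff_forall_notMem.2 fun v hv => hu ?_
      have hv0 := ne_zero_of_hermNorm_ne_zero (hv.1 ▸ one_ne_zero)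
      refine smul_left_injective F hv0 ?_
      simpa using hv.2.symm
    rw [hempty, Set.ncard_empty]

lemma ncard_hermNorm_eq_one_eq_sum [Fintype F] :
    {v : Fin 2 → F | hermNorm q v = 1}.ncard =
      ∑ y : F, {x : F | x ^ (q + 1) = 1 + y ^ (q + 1)}.ncard := by
  let e : {v : Fin 2 → F | hermNorm q v = 1} ≃
      Σ y : F, {x : F | x ^ (q + 1) = 1 + y ^ (q + 1)} :=
    { toFun := fun v => ⟨v.1 1, v.1 0, sub_eq_iff_eq_add.1 v.2⟩
      invFun := fun z => ⟨![z.2, z.1], sub_eq_iff_eq_add.2 z.2.2⟩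
      left_inv := fun v => Subtype.ext (by ext i; fin_cases i <;> rfl)
      right_inv := fun z => rfl }
  rw [← Nat.card_coe_set_eq, Nat.card_congr e, Nat.card_sigma]
  rfl

lemma IsSpecialUnitary.det_eq {A : SL(2, F)} (hA : IsSpecialUnitary q A) :
    A 0 0 * A 0 0 ^ q - A 1 0 ^ q * A 1 0 = 1 := by
  rw [← hA.apply_zero_one, ← hA.apply_one_one, ← Matrix.det_fin_two, A.det_coe]

variable [Finite F] {A : SL(2, F)} {u : F} {v : Fin 2 → F}

lemma hermNorm_pow (hF : Nat.card F = q ^ 2) (v : Fin 2 → F) :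
    hermNorm q v ^ q = hermNorm q v := by
  rw [hermNorm, sub_pow_of_card_eq_sq hF, ← pow_mul, ← pow_mul, mul_comm, pow_mul, pow_mul,
    pow_succ, pow_succ, pow_pow_of_card_eq_sq hF, pow_pow_of_card_eq_sq hF, mul_comm,
    mul_comm (v 1), pow_succ, pow_succ]

namespace IsSpecialUnitary

lemma hermNorm_mulVec (hF : Nat.card F = q ^ 2) (hA : IsSpecialUnitary q A) (v : Fin 2 → F) :
    hermNorm q (A.1 *ᵥ v) = hermNorm q v := by
  have hdet := hA.det_eq
  simp only [hermNorm, Matrix.mulVec, dotProduct, Fin.sum_univ_two, hA.apply_zero_one,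
    hA.apply_one_one, pow_succ, add_pow_of_card_eq_sq hF, mul_pow, pow_pow_of_card_eq_sq hF]
  linear_combination (v 0 ^ q * v 0 - v 1 ^ q * v 1) * hdet

/-- Conjugating one row of `A v = u v` and comparing with the other one shows that `u` is fixed by
conjugation. -/
lemma pow_eq_self_of_isotropic (hF : Nat.card F = q ^ 2) (hA : IsSpecialUnitary q A)
    (hv0 : v ≠ 0) (hv : hermNorm q v = 0) (hAv : A.1 *ᵥ v = u • v) : u ^ q = u := by
  have hx := apply_ne_zero_of_hermNorm_eq_zero hv0 hv 0
  have hy := apply_ne_zero_of_hermNorm_eq_zero hv0 hv 1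
  rw [mulVec_eq_smul_iff, hA.apply_zero_one, hA.apply_one_one] at hAv
  have hconj := congrArg (· ^ q) hAv.1
  simp only [add_pow_of_card_eq_sq hF, mul_pow, pow_pow_of_card_eq_sq hF] at hconj
  rw [hermNorm, pow_succ, pow_succ] at hv
  refine mul_right_cancel₀ (mul_ne_zero (pow_ne_zero q hx) hy) ?_
  linear_combination -v 1 * hconj + v 0 ^ q * hAv.2 - A 1 0 * hv

lemma pow_succ_eq_one_of_anisotropic (hF : Nat.card F = q ^ 2) (hA : IsSpecialUnitary q A)
    (hv : hermNorm q v ≠ 0) (hAv : A.1 *ᵥ v = u • v) : u ^ (q + 1) = 1 := by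
  have h := hA.hermNorm_mulVec hF v
  rw [hAv, hermNorm_smul] at h
  exact (mul_eq_right₀ hv).1 h

/-- An eigenvector `(x, y)` for an eigenvalue fixed by conjugation yields a second one, `(ȳ, x̄)`;
the two are independent when `(x, y)` is anisotropic. -/
lemma sq_ne_one_of_anisotropic (hF : Nat.card F = q ^ 2) (hA : IsSpecialUnitary q A)
    (hcenter : A ∉ Subgroup.center SL(2, F)) (hv : hermNorm q v ≠ 0) (hAv : A.1 *ᵥ v = u • v) :
    u ^ 2 ≠ 1 := by
  intro hu2
  have hu : u ^ (q + 1) = 1 := hA.pow_succ_eq_one_of_anisotropic hF hv hAv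
  have huq : u ^ q = u := by
    have hu0 : u ≠ 0 := by rintro rfl; simp at hu2
    exact mul_right_cancel₀ hu0 (by rw [← pow_succ, hu, ← sq, hu2])
  have hswap : A.1 *ᵥ ![v 1 ^ q, v 0 ^ q] = u • ![v 1 ^ q, v 0 ^ q] := by
    rw [mulVec_eq_smul_iff, hA.apply_zero_one, hA.apply_one_one] at hAv ⊢
    have hconj₀ := congrArg (· ^ q) hAv.1
    have hconj₁ := congrArg (· ^ q) hAv.2
    simp only [add_pow_of_card_eq_sq hF, mul_pow, pow_pow_of_card_eq_sq hF, huq] at hconj₀ hconj₁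
    constructor
    · simpa [add_comm] using hconj₁
    · simpa [add_comm] using hconj₀
  refine hcenter (mem_center_of_eq_smul_one (eq_smul_one_of_mulVec_eq_smul ?_ hAv hswap))
  rw [hermNorm, pow_succ', pow_succ', sub_ne_zero] at hv
  exact hv

lemma hermNorm_eq_zero_of_pow_eq_self (hF : Nat.card F = q ^ 2) (hA : IsSpecialUnitary q A)
    (hcenter : A ∉ Subgroup.center SL(2, F)) (hAv : A.1 *ᵥ v = u • v) (huq : u ^ q = u) :
    hermNorm q v = 0 := by
  by_contra hv
  refine hA.sq_ne_one_of_anisotropic hF hcenter hv hAv ?_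
  calc u ^ 2 = u ^ (q + 1) := by rw [pow_succ u q, huq, sq]
    _ = 1 := hA.pow_succ_eq_one_of_anisotropic hF hv hAv

lemma image_isotropicEigenlines (hF : Nat.card F = q ^ 2) (hA : IsSpecialUnitary q A)
    (hcenter : A ∉ Subgroup.center SL(2, F)) :
    (fun t => A 0 0 + A 0 1 * t) '' isotropicEigenlines q A =
      Units.val '' eigenvaluesIn (rootsOfUnity (q - 1) F) A := by
  have hq := one_lt_of_card_eq_sq hF
  ext u
  constructor
  · rintro ⟨t, ⟨ht, u, hu⟩, rfl⟩
    have hne : ![1, t] ≠ 0 := fun h => one_ne_zero (congrFun h 0)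
    have huq : u ^ q = u :=
      hA.pow_eq_self_of_isotropic hF hne (by rw [hermNorm_one_vec, ht, sub_self]) hu
    have hroot := isRoot_charpoly_iff_exists_mulVec_eq_smul.2 ⟨_, hne, hu⟩
    refine ⟨Units.mk0 u (ne_zero_of_isRoot_charpoly hroot),
      ⟨(mem_rootsOfUnity_sub_one_iff (by omega)).2 huq, hroot⟩, ?_⟩
    simpa using (mulVec_eq_smul_iff.1 hu).1.symm
  · rintro ⟨u, ⟨huq, hroot⟩, rfl⟩
    obtain ⟨v, hv0, hv⟩ := isRoot_charpoly_iff_exists_mulVec_eq_smul.1 hroot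
    have hiso := hA.hermNorm_eq_zero_of_pow_eq_self hF hcenter hv
      ((mem_rootsOfUnity_sub_one_iff (by omega)).1 huq)
    have hx := apply_ne_zero_of_hermNorm_eq_zero hv0 hiso 0
    have hline : v = v 0 • ![1, v 1 / v 0] := by
      ext i; fin_cases i <;> simp [mul_div_cancel₀ _ hx]
    have hAt : A.1 *ᵥ ![1, v 1 / v 0] = (u : F) • ![1, v 1 / v 0] := by
      rw [hline, Matrix.mulVec_smul, smul_comm] at hv
      exact smul_right_injective _ hx hv
    refine ⟨v 1 / v 0, ⟨?_, u, hAt⟩, by simpa using (mulVec_eq_smul_iff.1 hAt).1⟩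
    rw [div_pow, div_eq_one_iff_eq (pow_ne_zero _ hx), ← sub_eq_zero.1 hiso]

lemma ncard_isotropicEigenlines (hF : Nat.card F = q ^ 2) (hA : IsSpecialUnitary q A)
    (hcenter : A ∉ Subgroup.center SL(2, F)) :
    (isotropicEigenlines q A).ncard = (eigenvaluesIn (rootsOfUnity (q - 1) F) A).ncard := by
  have hinj : Set.InjOn (fun t => A 0 0 + A 0 1 * t) (isotropicEigenlines q A) := by
    rintro s ⟨-, u, hu⟩ t ⟨-, u', hu'⟩ hst
    obtain rfl : u = u' := by
      have h := (mulVec_eq_smul_iff.1 hu).1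
      have h' := (mulVec_eq_smul_iff.1 hu').1
      simp only [cons_val_zero, cons_val_one, mul_one] at h h'
      exact h.symm.trans (Eq.trans hst h')
    obtain ⟨k, hk⟩ := exists_eq_smul_of_mulVec_eq_smul hcenter
      (fun h => one_ne_zero (congrFun h 0)) hu hu'
    have hk1 : 1 = k := by simpa using congrFun hk 0
    simpa [← hk1, eq_comm] using congrFun hk 1
  rw [← hinj.ncard_image, hA.image_isotropicEigenlines hF hcenter,
    Set.ncard_image_of_injective _ Units.val_injective]

open Classical in
lemma ncard_normOneEigenvectors (hF : Nat.card F = q ^ 2) (hA : IsSpecialUnitary q A)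
    (hcenter : A ∉ Subgroup.center SL(2, F)) (hu : u ^ (q + 1) = 1) :
    (normOneEigenvectors q A u).ncard =
      if A.1.charpoly.IsRoot u ∧ u ^ 2 ≠ 1 then q + 1 else 0 := by
  split_ifs with h
  · obtain ⟨v, hv0, hAv⟩ := isRoot_charpoly_iff_exists_mulVec_eq_smul.1 h.1
    have hv : hermNorm q v ≠ 0 := by
      intro hiso
      rw [pow_succ, hA.pow_eq_self_of_isotropic hF hv0 hiso hAv, ← sq] at hu
      exact h.2 hu
    rw [normOneEigenvectors_eq_image hcenter hv hAv,
      Set.ncard_image_of_injective _ (smul_left_injective F hv0),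
      ncard_pow_eq hF (inv_ne_zero hv) (by rw [inv_pow, hermNorm_pow hF])]
  · have hempty : normOneEigenvectors q A u = ∅ := by
      refine Set.eq_empty_iff_forall_notMem.2 fun v hv => h ⟨?_, ?_⟩
      · exact isRoot_charpoly_iff_exists_mulVec_eq_smul.2
          ⟨v, ne_zero_of_hermNorm_ne_zero (hv.1 ▸ one_ne_zero), hv.2⟩
      · exact hA.sq_ne_one_of_anisotropic hF hcenter (hv.1 ▸ one_ne_zero) hv.2
    rw [hempty, Set.ncard_empty]

end IsSpecialUnitary

lemma ncard_isotropicEigenlines_one (hF : Nat.card F = q ^ 2) :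
    (isotropicEigenlines q (1 : SL(2, F))).ncard = q + 1 := by
  have hset : isotropicEigenlines q (1 : SL(2, F)) = {t | t ^ (q + 1) = 1} :=
    Set.ext fun t => and_iff_left ⟨1, by simp⟩
  rw [hset, ncard_pow_eq_one hF]

open Classical in
lemma ncard_pow_eq_one_add_pow (hF : Nat.card F = q ^ 2) (y : F) :
    {x : F | x ^ (q + 1) = 1 + y ^ (q + 1)}.ncard =
      if y ^ (q + 1) = -1 then 1 else q + 1 := by
  split_ifs with hy
  · have hset : {x : F | x ^ (q + 1) = 1 + y ^ (q + 1)} = {0} := by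
      ext x
      simp [hy]
    rw [hset, Set.ncard_singleton]
  · refine ncard_pow_eq hF (fun h => hy (eq_neg_of_add_eq_zero_right h)) ?_
    rw [add_pow_of_card_eq_sq hF, one_pow, ← pow_mul, mul_comm, pow_mul, pow_succ (y ^ q),
      pow_pow_of_card_eq_sq hF, pow_succ']

lemma ncard_hermNorm_eq_one_add (hF : Nat.card F = q ^ 2) :
    {v : Fin 2 → F | hermNorm q v = 1}.ncard + q = q ^ 3 := by
  classical
  have := Fintype.ofFinite F
  have hq := one_lt_of_card_eq_sq hF
  have hneg : (Finset.univ.filter fun y : F => y ^ (q + 1) = -1).card = q + 1 := by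
    rw [← Set.ncard_coe_finset, Finset.coe_filter_univ]
    refine ncard_pow_eq hF (neg_ne_zero.2 one_ne_zero) ?_
    simpa [show q ≠ 0 by omega] using sub_pow_of_card_eq_sq hF 0 1
  have hcompl := Finset.card_filter_add_card_filter_not (s := Finset.univ)
    (fun y : F => y ^ (q + 1) = -1)
  rw [Finset.card_univ, ← Nat.card_eq_fintype_card, hF, hneg] at hcompl
  rw [ncard_hermNorm_eq_one_eq_sum]
  simp only [ncard_pow_eq_one_add_pow hF, Finset.sum_ite, Finset.sum_const, hneg, smul_eq_mul]
  nlinarith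

end HermitianForm

section ProjectiveAction

lemma glAct_mk {F : Type*} [Field F] (M : GL (Fin 3) F) (v : Fin 3 → F) (hv : v ≠ 0) :
    glAct M (.mk F v hv) = .mk F (M.1 *ᵥ v) (M.toLin.toLinearEquiv.map_ne_zero_iff.2 hv) :=
  rfl

lemma sum_ncard_fixed_eq_numOrbits_mul_card {F G : Type*} [Field F] [Finite F] [Group G]
    [Fintype G] (φ : G →* GL (Fin 3) F) (O : Set (Projectivization F (Fin 3 → F)))
    (hO : ∀ g, ∀ x ∈ O, glAct (φ g) x ∈ O) :
    ∑ g, {x | x ∈ O ∧ glAct (φ g) x = x}.ncard = numOrbits φ.range O * Fintype.card G := by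
  classical
  let : MulAction G (Projectivization F (Fin 3 → F)) :=
    MulAction.compHom _ (Matrix.GeneralLinearGroup.toLin.toMonoidHom.comp φ)
  let P : SubMulAction G (Projectivization F (Fin 3 → F)) := ⟨O, fun g {x} => hO g x⟩
  have := Fintype.ofFinite P
  have hfixed (g : G) : Fintype.card (MulAction.fixedBy P g) =
      {x | x ∈ O ∧ glAct (φ g) x = x}.ncard := by
    rw [← Nat.card_eq_fintype_card, ← Nat.card_coe_set_eq]
    exact Nat.card_congr
      { toFun := fun x => ⟨x.1.1, x.1.2, congrArg Subtype.val x.2⟩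
        invFun := fun x => ⟨⟨x.1, x.2.1⟩, Subtype.ext x.2.2⟩
        left_inv := fun _ => rfl
        right_inv := fun _ => rfl }
  have horbit (x : Projectivization F (Fin 3 → F)) :
      {y | ∃ g ∈ φ.range, glAct g x = y} = MulAction.orbit G x :=
    Set.ext fun y => by simp; rfl
  have hker : MulAction.orbitRel G P = Setoid.ker fun x : O => MulAction.orbit G x.1 := by
    ext x y
    rw [Setoid.ker_def, MulAction.orbit_eq_iff, MulAction.orbitRel_apply]
    exact SubMulAction.mem_orbit_subMul_iff
  have hcard : Nat.card (MulAction.orbitRel.Quotient G P) = numOrbits φ.range O := by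
    rw [numOrbits, Set.image_eq_range]
    simp only [horbit]
    rw [← Nat.card_congr (Setoid.quotientKerEquivRange _), ← hker]
  rw [← hcard, Nat.card_eq_fintype_card, ← Finset.sum_congr rfl fun g _ => hfixed g]
  exact MulAction.sum_card_fixedBy_eq_card_orbits_mul_card_group G P

variable {F : Type*} [Field F] {q : ℕ}

variable (F) in
/-- The embedding of `2 × 2` matrices as upper left corners of `3 × 3` matrices, completed by the
diagonal entry `1`. -/
def corner : Matrix (Fin 2) (Fin 2) F →* Matrix (Fin 3) (Fin 3) F where
  toFun B := !![B 0 0, B 0 1, 0; B 1 0, B 1 1, 0; 0, 0, 1]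
  map_one' := by ext i j; fin_cases i <;> fin_cases j <;> rfl
  map_mul' A B := by
    ext i j
    fin_cases i <;> fin_cases j <;> simp [Matrix.mul_apply, Fin.sum_univ_succ]

variable (F) in
/-- The homomorphism sending `(A, ε)` to the corner embedding of `ε A`. -/
def cornerHom : SL(2, F) × Fˣ →* GL (Fin 3) F :=
  (Units.map (corner F)).comp <|
    Matrix.SpecialLinearGroup.toGL.noncommCoprod (Matrix.GeneralLinearGroup.scalar (Fin 2))
      fun _ ε => (Matrix.GeneralLinearGroup.scalar_commute ε _).symm

lemma coe_cornerHom (A : SL(2, F)) (ε : Fˣ) :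
    (cornerHom F (A, ε)).1 = corner F ((ε : F) • A.1) := by
  refine congrArg (corner F) ?_
  change A.1 * Matrix.scalar (Fin 2) (ε : F) = _
  rw [Matrix.scalar_apply, ← Matrix.smul_one_eq_diagonal, mul_smul_comm, mul_one]

lemma cornerHom_mulVec (A : SL(2, F)) (ε : Fˣ) (v : Fin 2 → F) (z : F) :
    (cornerHom F (A, ε)).1 *ᵥ ![v 0, v 1, z] =
      ![((ε : F) • A.1 *ᵥ v) 0, ((ε : F) • A.1 *ᵥ v) 1, z] := by
  rw [coe_cornerHom, ← Matrix.smul_mulVec]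
  ext i
  fin_cases i <;> simp [corner, Matrix.mulVec, dotProduct, Fin.sum_univ_succ]

lemma glAct_cornerHom_mk (A : SL(2, F)) (ε : Fˣ) (v : Fin 2 → F) (z : F)
    (hv : ![v 0, v 1, z] ≠ 0) :
    ∃ hw, glAct (cornerHom F (A, ε)) (.mk F ![v 0, v 1, z] hv) =
      .mk F ![((ε : F) • A.1 *ᵥ v) 0, ((ε : F) • A.1 *ᵥ v) 1, z] hw :=
  ⟨cornerHom_mulVec A ε v z ▸ (cornerHom F (A, ε)).toLin.toLinearEquiv.map_ne_zero_iff.2 hv,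
    by simp only [glAct_mk, cornerHom_mulVec]⟩

/-- The point `(x : y : 1)` of the affine chart, for `v = (x, y)`. -/
def affinePt (v : Fin 2 → F) : Projectivization F (Fin 3 → F) :=
  .mk F ![v 0, v 1, 1] fun h => one_ne_zero (congrFun h 2)

/-- The point `(1 : t : 0)` of the line at infinity. -/
def ptAtInfinity (t : F) : Projectivization F (Fin 3 → F) :=
  .mk F ![1, t, 0] fun h => one_ne_zero (congrFun h 0)

lemma affinePt_injective : Function.Injective (affinePt : (Fin 2 → F) → _) := by
  intro v w h
  obtain ⟨k, hk⟩ := (Projectivization.mk_eq_mk_iff' F _ _ _ _).1 h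
  obtain rfl : k = 1 := by simpa using congrFun hk 2
  ext i
  fin_cases i
  · simpa using (congrFun hk 0).symm
  · simpa using (congrFun hk 1).symm

lemma ptAtInfinity_eq_iff {t : F} {v : Fin 2 → F} (hv : ![v 0, v 1, 0] ≠ 0) :
    .mk F ![v 0, v 1, 0] hv = ptAtInfinity t ↔ ∃ u : F, v = u • ![1, t] := by
  rw [ptAtInfinity, Projectivization.mk_eq_mk_iff']
  simp [funext_iff, Fin.forall_fin_succ, eq_comm]

lemma ptAtInfinity_injective : Function.Injective (ptAtInfinity : F → _) := by
  intro s t h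
  obtain ⟨u, hu⟩ := (Projectivization.mk_eq_mk_iff' F _ _ _ _).1 h
  obtain rfl : u = 1 := by simpa using congrFun hu 0
  simpa using (congrFun hu 1).symm

lemma disjoint_range_affinePt_range_ptAtInfinity :
    Disjoint (Set.range (affinePt : (Fin 2 → F) → _)) (Set.range ptAtInfinity) := by
  rw [Set.disjoint_left]
  rintro _ ⟨v, rfl⟩ ⟨t, h⟩
  obtain ⟨u, hu⟩ := (Projectivization.mk_eq_mk_iff' F _ _ _ _).1 h
  obtain rfl : u = 0 := by simpa using congrFun hu 2
  simpa using congrFun hu 0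

lemma mk_mem_hermitianPts (v : Fin 2 → F) (z : F) (hv : ![v 0, v 1, z] ≠ 0) :
    .mk F ![v 0, v 1, z] hv ∈ hermitianPts q F ↔ hermNorm q v = z ^ (q + 1) := by
  obtain ⟨k, hk⟩ := Projectivization.exists_smul_eq_mk_rep F _ hv
  have hk0 : (k : F) ^ (q + 1) ≠ 0 := pow_ne_zero _ k.ne_zero
  rw [hermitianPts, Set.mem_ofPred_eq, ← hk, eq_sub_iff_add_eq', ← eq_sub_iff_add_eq, eq_comm,
    hermNorm]
  simp [Units.smul_def, mul_pow, ← mul_sub, hk0]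

lemma affinePt_mem_hermitianPts {v : Fin 2 → F} :
    affinePt v ∈ hermitianPts q F ↔ hermNorm q v = 1 := by
  rw [affinePt, mk_mem_hermitianPts, one_pow]

lemma ptAtInfinity_mem_hermitianPts {t : F} :
    ptAtInfinity t ∈ hermitianPts q F ↔ t ^ (q + 1) = 1 := by
  refine (mk_mem_hermitianPts ![1, t] 0 _).trans ?_
  rw [hermNorm_one_vec, zero_pow q.succ_ne_zero, sub_eq_zero, eq_comm]

lemma exists_mk_eq (x : Projectivization F (Fin 3 → F)) :
    ∃ (v : Fin 2 → F) (z : F) (hv : ![v 0, v 1, z] ≠ 0), x = .mk F ![v 0, v 1, z] hv := by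
  induction x using Projectivization.ind with
  | h w hw =>
    have hcoord : ![w 0, w 1, w 2] = w := by ext i; fin_cases i <;> rfl
    exact ⟨![w 0, w 1], w 2, hcoord.symm ▸ hw, by simp [hcoord]⟩

lemma hermitianPts_subset :
    hermitianPts q F ⊆ Set.range affinePt ∪ Set.range ptAtInfinity := by
  intro x hx
  obtain ⟨v, z, hv, rfl⟩ := exists_mk_eq x
  rw [mk_mem_hermitianPts] at hx
  by_cases hz : z = 0
  · subst hz
    rw [zero_pow q.succ_ne_zero] at hx
    have hv0 := apply_ne_zero_of_hermNorm_eq_zero (v := v) (by rintro rfl; simp at hv) hx 0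
    refine Or.inr ⟨v 1 / v 0, ((ptAtInfinity_eq_iff hv).2 ⟨v 0, ?_⟩).symm⟩
    ext i
    fin_cases i <;> simp [mul_div_cancel₀, hv0]
  · refine Or.inl ⟨z⁻¹ • v, (Projectivization.mk_eq_mk_iff' F _ _ _ _).2 ⟨z⁻¹, ?_⟩⟩
    ext i
    fin_cases i <;> simp [hz]

lemma glAct_cornerHom_affinePt (A : SL(2, F)) (ε : Fˣ) (v : Fin 2 → F) :
    glAct (cornerHom F (A, ε)) (affinePt v) = affinePt ((ε : F) • A.1 *ᵥ v) :=
  (glAct_cornerHom_mk A ε v 1 _).2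

lemma glAct_cornerHom_affinePt_eq_iff {A : SL(2, F)} {ε : Fˣ} {v : Fin 2 → F} :
    glAct (cornerHom F (A, ε)) (affinePt v) = affinePt v ↔
      A.1 *ᵥ v = ((ε⁻¹ : Fˣ) : F) • v := by
  rw [glAct_cornerHom_affinePt, affinePt_injective.eq_iff]
  exact smul_eq_iff_eq_inv_smul ε

lemma glAct_cornerHom_ptAtInfinity_eq_iff {A : SL(2, F)} {ε : Fˣ} {t : F} :
    glAct (cornerHom F (A, ε)) (ptAtInfinity t) = ptAtInfinity t ↔
      ∃ u : F, A.1 *ᵥ ![1, t] = u • ![1, t] := by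
  obtain ⟨hw, himage⟩ := glAct_cornerHom_mk A ε ![1, t] 0 fun h => one_ne_zero (congrFun h 0)
  refine (himage.congr_left.trans (ptAtInfinity_eq_iff hw)).trans ?_
  constructor
  · rintro ⟨u, hu⟩
    exact ⟨(ε⁻¹ : Fˣ) * u, by rw [mul_smul, ← hu]; exact (inv_smul_smul ε _).symm⟩
  · rintro ⟨u, hu⟩
    exact ⟨ε * u, by rw [hu, mul_smul]⟩

lemma glAct_cornerHom_mem_hermitianPts [Finite F] (hF : Nat.card F = q ^ 2) {A : SL(2, F)}
    (hA : IsSpecialUnitary q A) {ε : Fˣ} (hε : ε ∈ rootsOfUnity (q + 1) F)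
    {x : Projectivization F (Fin 3 → F)} (hx : x ∈ hermitianPts q F) :
    glAct (cornerHom F (A, ε)) x ∈ hermitianPts q F := by
  obtain ⟨v, z, hv, rfl⟩ := exists_mk_eq x
  obtain ⟨hw, himage⟩ := glAct_cornerHom_mk A ε v z hv
  rw [mk_mem_hermitianPts] at hx
  rw [himage, mk_mem_hermitianPts, hermNorm_smul, hA.hermNorm_mulVec hF,
    (mem_rootsOfUnity' _ _).1 hε, one_mul, hx]

lemma fixed_cornerHom_eq_union (A : SL(2, F)) (ε : Fˣ) :
    {x | x ∈ hermitianPts q F ∧ glAct (cornerHom F (A, ε)) x = x} =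
      affinePt '' normOneEigenvectors q A ((ε⁻¹ : Fˣ) : F) ∪
        ptAtInfinity '' isotropicEigenlines q A := by
  ext x
  constructor
  · rintro ⟨hx, hfix⟩
    rcases hermitianPts_subset hx with ⟨v, rfl⟩ | ⟨t, rfl⟩
    · exact Or.inl ⟨v, ⟨affinePt_mem_hermitianPts.1 hx,
        glAct_cornerHom_affinePt_eq_iff.1 hfix⟩, rfl⟩
    · exact Or.inr ⟨t, ⟨ptAtInfinity_mem_hermitianPts.1 hx,
        glAct_cornerHom_ptAtInfinity_eq_iff.1 hfix⟩, rfl⟩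
  · rintro (⟨v, ⟨hv, hAv⟩, rfl⟩ | ⟨t, ⟨ht, hAt⟩, rfl⟩)
    · exact ⟨affinePt_mem_hermitianPts.2 hv, glAct_cornerHom_affinePt_eq_iff.2 hAv⟩
    · exact ⟨ptAtInfinity_mem_hermitianPts.2 ht, glAct_cornerHom_ptAtInfinity_eq_iff.2 hAt⟩

lemma ncard_fixed_cornerHom [Finite F] (A : SL(2, F)) (ε : Fˣ) :
    {x | x ∈ hermitianPts q F ∧ glAct (cornerHom F (A, ε)) x = x}.ncard =
      (normOneEigenvectors q A ((ε⁻¹ : Fˣ) : F)).ncard + (isotropicEigenlines q A).ncard := by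
  rw [fixed_cornerHom_eq_union, Set.ncard_union_eq, affinePt_injective.injOn.ncard_image,
    ptAtInfinity_injective.injOn.ncard_image]
  exact disjoint_range_affinePt_range_ptAtInfinity.mono (Set.image_subset_range _ _)
    (Set.image_subset_range _ _)

end ProjectiveAction

section FixedPairs

variable {F : Type*} [Field F] {q : ℕ} {E : Subgroup Fˣ} [Fintype E] {A : SL(2, F)}

/-- The number of pairs of a scalar `ε ∈ E` and a point of the Hermitian curve fixed by the corner
embedding of `ε A`: the contribution of `A` to the sum in Burnside's lemma. -/
noncomputable def numFixedPairs (q : ℕ) (E : Subgroup Fˣ) [Fintype E] (A : SL(2, F)) : ℕ :=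
  ∑ ε : E, {x | x ∈ hermitianPts q F ∧ glAct (cornerHom F (A, ε.1)) x = x}.ncard

variable [Finite F]

lemma numFixedPairs_eq (A : SL(2, F)) :
    numFixedPairs q E A = ∑ ε : E, (normOneEigenvectors q A (ε.1 : F)).ncard +
      Nat.card E * (isotropicEigenlines q A).ncard := by
  have hinv : ∑ ε : E, (normOneEigenvectors q A ((ε.1⁻¹ : Fˣ) : F)).ncard =
      ∑ ε : E, (normOneEigenvectors q A (ε.1 : F)).ncard :=
    Equiv.sum_comp (Equiv.inv E) fun ε : E => (normOneEigenvectors q A (ε.1 : F)).ncard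
  simp only [numFixedPairs, ncard_fixed_cornerHom, Finset.sum_add_distrib, hinv, Finset.sum_const,
    Finset.card_univ, smul_eq_mul, Nat.card_eq_fintype_card]

lemma numFixedPairs_one (hF : Nat.card F = q ^ 2) :
    numFixedPairs q E (1 : SL(2, F)) + q = q ^ 3 + Nat.card E * (q + 1) := by
  classical
  have haffine : ∑ ε : E, (normOneEigenvectors q (1 : SL(2, F)) (ε.1 : F)).ncard =
      {v : Fin 2 → F | hermNorm q v = 1}.ncard := by
    simp only [ncard_normOneEigenvectors_one, Units.val_eq_one, OneMemClass.coe_eq_one,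
      Finset.sum_ite_eq', Finset.mem_univ, if_true]
  rw [numFixedPairs_eq, haffine, ncard_isotropicEigenlines_one hF, add_right_comm,
    ncard_hermNorm_eq_one_add hF]

namespace IsSpecialUnitary

lemma numFixedPairs_eq (hF : Nat.card F = q ^ 2) (hA : IsSpecialUnitary q A)
    (hcenter : A ∉ Subgroup.center SL(2, F)) (hE : E ≤ rootsOfUnity (q + 1) F) :
    numFixedPairs q E A = {u ∈ eigenvaluesIn E A | (u : F) ^ 2 ≠ 1}.ncard * (q + 1) +
      Nat.card E * (eigenvaluesIn (rootsOfUnity (q - 1) F) A).ncard := by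
  classical
  have hsum (ε : E) : (normOneEigenvectors q A (ε.1 : F)).ncard =
      if A.1.charpoly.IsRoot (ε.1 : F) ∧ (ε.1 : F) ^ 2 ≠ 1 then q + 1 else 0 := by
    rw [hA.ncard_normOneEigenvectors hF hcenter ((mem_rootsOfUnity' _ _).1 (hE ε.2))]
  have himage : {u ∈ eigenvaluesIn E A | (u : F) ^ 2 ≠ 1} =
      Subtype.val '' {ε : E | A.1.charpoly.IsRoot (ε.1 : F) ∧ (ε.1 : F) ^ 2 ≠ 1} := by
    ext u
    simp only [eigenvaluesIn, Set.mem_ofPred_eq, Set.mem_image, Subtype.exists, exists_and_right,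
      exists_eq_right]
    tauto
  have hcard : {u ∈ eigenvaluesIn E A | (u : F) ^ 2 ≠ 1}.ncard =
      (Finset.univ.filter fun ε : E => A.1.charpoly.IsRoot (ε.1 : F) ∧ (ε.1 : F) ^ 2 ≠ 1).card := by
    rw [himage, Subtype.val_injective.injOn.ncard_image, ← Set.ncard_coe_finset,
      Finset.coe_filter_univ]
  rw [_root_.numFixedPairs_eq, hA.ncard_isotropicEigenlines hF hcenter, hcard]
  simp only [hsum, Finset.sum_ite, Finset.sum_const, smul_eq_mul, mul_zero, add_zero]

lemma numFixedPairs_of_orderOf_eq_char {p : ℕ} [Fact p.Prime] [CharP F p]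
    (hF : Nat.card F = q ^ 2) (hA : IsSpecialUnitary q A) (hE : E ≤ rootsOfUnity (q + 1) F)
    (hp : orderOf A = p) : numFixedPairs q E A = Nat.card E := by
  have hpow : A ^ p = 1 := hp ▸ pow_orderOf_eq_one A
  have hne : A ≠ 1 := fun h => (Fact.out : p.Prime).one_lt.ne (by rw [← hp, h, orderOf_one])
  have hempty : {u ∈ eigenvaluesIn E A | (u : F) ^ 2 ≠ 1} = ∅ := by
    rw [eigenvaluesIn_of_pow_char E hpow, Set.sep_eq_empty_iff_mem_false]
    rintro _ rfl h
    exact h (by simp)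
  rw [hA.numFixedPairs_eq hF (notMem_center_of_pow_char hpow hne) hE, hempty,
    eigenvaluesIn_of_pow_char _ hpow, Set.ncard_empty, Set.ncard_singleton]
  ring

lemma numFixedPairs_of_odd_prime_orderOf (hF : Nat.card F = q ^ 2) (hA : IsSpecialUnitary q A)
    (hE : E ≤ rootsOfUnity (q + 1) F) (hprime : (orderOf A).Prime) (hodd : Odd (orderOf A))
    (hr : (orderOf A : F) ≠ 0) :
    numFixedPairs q E A = (if orderOf A ∣ Nat.card E then 2 else 0) * (q + 1) +
      Nat.card E * if orderOf A ∣ q - 1 then 2 else 0 := by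
  have hne : A ≠ 1 := fun h => hprime.one_lt.ne (by rw [h, orderOf_one])
  have hsep : {u ∈ eigenvaluesIn E A | (u : F) ^ 2 ≠ 1} = eigenvaluesIn E A :=
    Set.sep_eq_self_iff_mem_true.2 fun u hu => sq_ne_one_of_isRoot_charpoly hr hodd hne hu.2
  rw [hA.numFixedPairs_eq hF (notMem_center_of_odd_orderOf hodd hne) hE, hsep,
    ncard_eigenvaluesIn hprime hodd hr, ncard_eigenvaluesIn hprime hodd hr,
    natCard_rootsOfUnity_sub_one hF]

end IsSpecialUnitary

end FixedPairs

section AlternatingGroup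

lemma monoidHom_eq_one_of_isPerfect {G H : Type*} [Group G] [Group.IsPerfect G] [CommGroup H]
    (φ : G →* H) : φ = 1 := by
  rw [← MonoidHom.ker_eq_top_iff, eq_top_iff, ← Group.IsPerfect.commutator_eq_top]
  exact Abelianization.commutator_subset_ker φ

lemma isPerfect_alternatingGroup_five : Group.IsPerfect (alternatingGroup (Fin 5)) :=
  ⟨commutator_alternatingGroup_eq_top (by simp)⟩

set_option maxRecDepth 100000 in
lemma orderOf_mem_of_alternatingGroup_five (σ : alternatingGroup (Fin 5)) :
    orderOf σ ∈ ({1, 2, 3, 5} : Finset ℕ) := by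
  have hpow : ∀ σ : alternatingGroup (Fin 5), σ ^ 2 = 1 ∨ σ ^ 3 = 1 ∨ σ ^ 5 = 1 := by
    decide +kernel
  have hdvd := (hpow σ).imp orderOf_dvd_of_pow_eq_one
    (Or.imp orderOf_dvd_of_pow_eq_one orderOf_dvd_of_pow_eq_one)
  simp only [Nat.dvd_prime Nat.prime_two, Nat.dvd_prime Nat.prime_three,
    Nat.dvd_prime Nat.prime_five] at hdvd
  simp only [Finset.mem_insert, Finset.mem_singleton]
  tauto

lemma card_alternatingGroup_five_orderOf_eq {p : ℕ} [Fact p.Prime] :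
    (Finset.univ.filter fun σ : alternatingGroup (Fin 5) => orderOf σ = p).card =
      (Finset.univ.filter fun σ : alternatingGroup (Fin 5) => σ ^ p = 1 ∧ σ ≠ 1).card := by
  simp only [orderOf_eq_prime_iff]

set_option maxRecDepth 100000 in
lemma sum_alternatingGroup_five_orderOf (g : ℕ → ℕ) :
    ∑ σ : alternatingGroup (Fin 5), g (orderOf σ) = g 1 + 15 * g 2 + 20 * g 3 + 24 * g 5 := by
  have h2 : (Finset.univ.filter fun σ : alternatingGroup (Fin 5) => orderOf σ = 2).card = 15 :=
    card_alternatingGroup_five_orderOf_eq.trans (by decide +kernel)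
  have h3 : (Finset.univ.filter fun σ : alternatingGroup (Fin 5) => orderOf σ = 3).card = 20 :=
    card_alternatingGroup_five_orderOf_eq.trans (by decide +kernel)
  have h5 : (Finset.univ.filter fun σ : alternatingGroup (Fin 5) => orderOf σ = 5).card = 24 :=
    haveI := Fact.mk Nat.prime_five
    card_alternatingGroup_five_orderOf_eq.trans (by decide +kernel)
  rw [← Finset.sum_fiberwise_of_maps_to fun σ _ => orderOf_mem_of_alternatingGroup_five σ,
    Finset.sum_congr rfl fun n _ => Finset.sum_congr rfl fun σ hσ =>
      congrArg g (Finset.mem_filter.1 hσ).2]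
  simp [h2, h3, h5, Finset.filter_eq', add_assoc]

lemma sum_eq_of_equiv_alternatingGroup_five {G : Type*} [Group G] [Fintype G]
    (f : G ≃* alternatingGroup (Fin 5)) {φ : G → ℕ} {a b c : ℕ}
    (h2 : ∀ x, orderOf x = 2 → φ x = a) (h3 : ∀ x, orderOf x = 3 → φ x = b)
    (h5 : ∀ x, orderOf x = 5 → φ x = c) :
    ∑ x, φ x = φ 1 + 15 * a + 20 * b + 24 * c := by
  let g (r : ℕ) := if r = 1 then φ 1 else if r = 2 then a else if r = 3 then b else c
  have hφ (x : G) : φ x = g (orderOf (f x)) := by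
    have hmem := orderOf_mem_of_alternatingGroup_five (f x)
    rw [f.orderOf_eq] at hmem ⊢
    simp only [Finset.mem_insert, Finset.mem_singleton] at hmem
    rcases hmem with h | h | h | h
    · rw [h, orderOf_eq_one_iff.1 h]; rfl
    · rw [h, h2 x h]; rfl
    · rw [h, h3 x h]; rfl
    · rw [h, h5 x h]; rfl
  calc ∑ x, φ x = ∑ σ, g (orderOf σ) :=
        Fintype.sum_equiv f.toEquiv _ (fun σ => g (orderOf σ)) hφ
    _ = φ 1 + 15 * a + 20 * b + 24 * c := sum_alternatingGroup_five_orderOf g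

end AlternatingGroup

section SubgroupsOfMl

variable {F : Type*} [Field F] {q : ℕ}

lemma det_corner (B : Matrix (Fin 2) (Fin 2) F) : (corner F B).det = B.det := by
  simp [corner, Matrix.det_fin_three, Matrix.det_fin_two]

lemma corner_injective : Function.Injective (corner F) := by
  intro A B h
  ext i j
  have hentry (k l : Fin 3) : corner F A k l = corner F B k l := by rw [h]
  fin_cases i <;> fin_cases j
  exacts [hentry 0 0, hentry 0 1, hentry 1 0, hentry 1 1]

lemma cornerHom_inl_injective :
    Function.Injective ((cornerHom F).comp (MonoidHom.inl SL(2, F) Fˣ)) := by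
  intro A B h
  refine Subtype.ext (corner_injective ?_)
  simpa [coe_cornerHom] using congrArg Units.val h

lemma cornerHom_inr_injective :
    Function.Injective ((cornerHom F).comp (MonoidHom.inr SL(2, F) Fˣ)) := by
  intro ε δ h
  have hcorner : corner F ((ε : F) • 1) = corner F ((δ : F) • 1) := by
    simpa [coe_cornerHom] using congrArg Units.val h
  exact Units.ext (by simpa using congrFun₂ (corner_injective hcorner) 0 0)

lemma exists_cornerHom_eq_of_mem_MlSet {M : GL (Fin 3) F} (hM : M ∈ MlSet q F)
    (hdet : M.1.det = 1) : ∃ A : SL(2, F), IsSpecialUnitary q A ∧ cornerHom F (A, 1) = M := by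
  obtain ⟨a, c, τ, hac, -, hM⟩ := hM
  have hcorner : M.1 = corner F !![a, τ * c ^ q; c, τ * a ^ q] := hM
  rw [hcorner, det_corner] at hdet
  obtain rfl : τ = 1 := by
    rw [Matrix.det_fin_two_of] at hdet
    linear_combination hdet - τ * hac
  let A : SL(2, F) := ⟨!![a, 1 * c ^ q; c, 1 * a ^ q], hdet⟩
  refine ⟨A, ⟨one_mul _, one_mul _⟩, Units.ext ?_⟩
  rw [coe_cornerHom, Units.val_one, one_smul, hcorner]

lemma exists_specialUnitary_map_eq {S : Subgroup (GL (Fin 3) F)} [Group.IsPerfect S]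
    (hS : (S : Set (GL (Fin 3) F)) ⊆ MlSet q F) :
    ∃ T : Subgroup SL(2, F), (∀ A ∈ T, IsSpecialUnitary q A) ∧
      T.map ((cornerHom F).comp (MonoidHom.inl SL(2, F) Fˣ)) = S := by
  have hlift (M : GL (Fin 3) F) (hM : M ∈ S) :
      ∃ A : SL(2, F), IsSpecialUnitary q A ∧ cornerHom F (A, 1) = M := by
    have hdet := DFunLike.congr_fun (monoidHom_eq_one_of_isPerfect
      ((Matrix.GeneralLinearGroup.det (n := Fin 3) (R := F)).comp S.subtype)) ⟨M, hM⟩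
    exact exists_cornerHom_eq_of_mem_MlSet (hS hM) (congrArg Units.val hdet)
  refine ⟨S.comap ((cornerHom F).comp (MonoidHom.inl SL(2, F) Fˣ)), fun A hA => ?_,
    Subgroup.map_comap_eq_self fun M hM => ?_⟩
  · obtain ⟨B, hB, hBA⟩ := hlift _ hA
    exact cornerHom_inl_injective hBA ▸ hB
  · obtain ⟨B, -, hB⟩ := hlift M hM
    exact ⟨B, hB⟩

/-- The group of scalars `ε` of norm one with `diag(ε, ε, 1) ∈ L`. -/
def scalarGroup (q : ℕ) (L : Subgroup (GL (Fin 3) F)) : Subgroup Fˣ :=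
  L.comap ((cornerHom F).comp (MonoidHom.inr SL(2, F) Fˣ)) ⊓ rootsOfUnity (q + 1) F

lemma coe_cornerHom_one_left (ε : Fˣ) :
    (cornerHom F (1, ε)).1 = Matrix.diagonal ![(ε : F), ε, 1] := by
  rw [coe_cornerHom]
  ext i j
  fin_cases i <;> fin_cases j <;> simp [corner]

lemma image_scalarGroup (L : Subgroup (GL (Fin 3) F)) :
    (cornerHom F).comp (MonoidHom.inr SL(2, F) Fˣ) '' scalarGroup q L =
      (L : Set (GL (Fin 3) F)) ∩ ZSet q F := by
  ext M
  constructor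
  · rintro ⟨ε, ⟨hL, hε⟩, rfl⟩
    exact ⟨hL, ε, (mem_rootsOfUnity' _ _).1 hε, coe_cornerHom_one_left ε⟩
  · rintro ⟨hM, e, he, hMe⟩
    lift e to Fˣ using IsUnit.of_pow_eq_one he q.succ_ne_zero
    obtain rfl : cornerHom F (1, e) = M := Units.ext ((coe_cornerHom_one_left e).trans hMe.symm)
    exact ⟨e, ⟨hM, (mem_rootsOfUnity' _ _).2 he⟩, rfl⟩

lemma natCard_scalarGroup (L : Subgroup (GL (Fin 3) F)) :
    Nat.card (scalarGroup q L) =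
      Nat.card ((L : Set (GL (Fin 3) F)) ∩ ZSet q F : Set (GL (Fin 3) F)) := by
  rw [← image_scalarGroup]
  exact (Nat.card_image_of_injective cornerHom_inr_injective _).symm

lemma map_prod_scalarGroup_eq {L S : Subgroup (GL (Fin 3) F)} {T : Subgroup SL(2, F)}
    (hT : T.map ((cornerHom F).comp (MonoidHom.inl SL(2, F) Fˣ)) = S)
    (hL : L = Subgroup.closure
      ((S : Set (GL (Fin 3) F)) ∪ ((L : Set (GL (Fin 3) F)) ∩ ZSet q F))) :
    (T.prod (scalarGroup q L)).map (cornerHom F) = L := by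
  apply le_antisymm
  · rw [Subgroup.map_le_iff_le_comap, Subgroup.prod_le_iff, ← Subgroup.map_le_iff_le_comap,
      ← Subgroup.map_le_iff_le_comap, Subgroup.map_map, Subgroup.map_map, hT]
    refine ⟨?_, Subgroup.map_le_iff_le_comap.2 inf_le_left⟩
    rw [hL]
    exact fun M hM => Subgroup.subset_closure (Or.inl hM)
  · conv_lhs => rw [hL, ← image_scalarGroup, ← hT]
    rw [Subgroup.closure_le]
    rintro _ (⟨A, hA, rfl⟩ | ⟨ε, hε, rfl⟩)
    · exact ⟨(A, 1), ⟨hA, one_mem _⟩, rfl⟩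
    · exact ⟨(1, ε), ⟨one_mem _, hε⟩, rfl⟩

lemma exists_specialUnitary_mulEquiv_map_prod_eq {L S : Subgroup (GL (Fin 3) F)} [Group.IsPerfect S]
    (hLMl : (L : Set (GL (Fin 3) F)) ⊆ MlSet q F)
    (hgen : L = Subgroup.closure
      ((S : Set (GL (Fin 3) F)) ∪ ((L : Set (GL (Fin 3) F)) ∩ ZSet q F))) :
    ∃ T : Subgroup SL(2, F), (∀ A ∈ T, IsSpecialUnitary q A) ∧ Nonempty (T ≃* S) ∧
      (T.prod (scalarGroup q L)).map (cornerHom F) = L := by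
  have hSL : (S : Set (GL (Fin 3) F)) ⊆ L := by
    rw [hgen]
    exact fun M hM => Subgroup.subset_closure (Or.inl hM)
  obtain ⟨T, hT, rfl⟩ := exists_specialUnitary_map_eq (hSL.trans hLMl)
  exact ⟨T, hT, ⟨T.equivMapOfInjective _ cornerHom_inl_injective⟩,
    map_prod_scalarGroup_eq rfl hgen⟩

end SubgroupsOfMl

section OrbitCount

variable {F : Type*} [Field F] [Finite F] {q : ℕ} {T : Subgroup SL(2, F)} {E : Subgroup Fˣ}

lemma sum_numFixedPairs_eq [Fintype T] [Fintype E] (hF : Nat.card F = q ^ 2)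
    (hT : ∀ A ∈ T, IsSpecialUnitary q A) (hE : E ≤ rootsOfUnity (q + 1) F) :
    ∑ A : T, numFixedPairs q E A.1 =
      numOrbits ((T.prod E).map (cornerHom F)) (hermitianPts q F) *
        (Nat.card T * Nat.card E) := by
  have hburnside := sum_ncard_fixed_eq_numOrbits_mul_card
    ((cornerHom F).comp (T.subtype.prodMap E.subtype)) (hermitianPts q F)
    fun g _ hx => glAct_cornerHom_mem_hermitianPts hF (hT _ g.1.2) (hE g.2.2) hx
  rw [MonoidHom.range_comp, MonoidHom.range_prodMap, Subgroup.range_subtype,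
    Subgroup.range_subtype, Fintype.sum_prod_type, Fintype.card_prod] at hburnside
  rw [Nat.card_eq_fintype_card, Nat.card_eq_fintype_card]
  exact hburnside

lemma numOrbits_mul_of_specialUnitary_prod [CharP F 2] (hF : Nat.card F = q ^ 2)
    (hT : ∀ A ∈ T, IsSpecialUnitary q A) (f : T ≃* alternatingGroup (Fin 5))
    (hE : E ≤ rootsOfUnity (q + 1) F) :
    numOrbits ((T.prod E).map (cornerHom F)) (hermitianPts q F) * (60 * Nat.card E) + q =
      q ^ 3 + Nat.card E * (q + 1) + 15 * Nat.card E +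
      20 * ((if 3 ∣ Nat.card E then 2 else 0) * (q + 1) +
        Nat.card E * if 3 ∣ q - 1 then 2 else 0) +
      24 * ((if 5 ∣ Nat.card E then 2 else 0) * (q + 1) +
        Nat.card E * if 5 ∣ q - 1 then 2 else 0) := by
  have := Fintype.ofFinite T
  have := Fintype.ofFinite E
  have hodd (r : ℕ) (hprime : r.Prime) (hr : Odd r) (A : T) (hA : orderOf A = r) :
      numFixedPairs q E A.1 = (if r ∣ Nat.card E then 2 else 0) * (q + 1) +
        Nat.card E * if r ∣ q - 1 then 2 else 0 := by
    obtain rfl : orderOf A.1 = r := (Subgroup.orderOf_coe A).trans hA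
    refine (hT _ A.2).numFixedPairs_of_odd_prime_orderOf hF hE hprime hr ?_
    rwa [Ne, CharP.cast_eq_zero_iff F 2, ← even_iff_two_dvd, Nat.not_even_iff_odd]
  have htwo (A : T) (hA : orderOf A = 2) : numFixedPairs q E A.1 = Nat.card E :=
    (hT _ A.2).numFixedPairs_of_orderOf_eq_char hF hE ((Subgroup.orderOf_coe A).trans hA)
  have hcard : Nat.card T = 60 := by
    rw [Nat.card_congr f.toEquiv, nat_card_alternatingGroup, Nat.card_fin]
    rfl
  have hone := numFixedPairs_one (E := E) hF
  have hburnside := sum_numFixedPairs_eq hF hT hE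
  rw [sum_eq_of_equiv_alternatingGroup_five f htwo (hodd 3 Nat.prime_three (by decide))
    (hodd 5 Nat.prime_five (by decide)), hcard, OneMemClass.coe_one] at hburnside
  rw [← hburnside, ← hone]
  ring

lemma numOrbits_mul_of_mulEquiv_alternatingGroup_five [CharP F 2] (hF : Nat.card F = q ^ 2)
    {L S : Subgroup (GL (Fin 3) F)} {w : ℕ} (e : S ≃* alternatingGroup (Fin 5))
    (hLMl : (L : Set (GL (Fin 3) F)) ⊆ MlSet q F)
    (hZcard : Nat.card ((L : Set (GL (Fin 3) F)) ∩ ZSet q F : Set (GL (Fin 3) F)) = w)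
    (hgen : L = Subgroup.closure
      ((S : Set (GL (Fin 3) F)) ∪ ((L : Set (GL (Fin 3) F)) ∩ ZSet q F))) :
    numOrbits L (hermitianPts q F) * (60 * w) + q =
      q ^ 3 + w * (q + 1) + 15 * w +
      20 * ((if 3 ∣ w then 2 else 0) * (q + 1) + w * if 3 ∣ q - 1 then 2 else 0) +
      24 * ((if 5 ∣ w then 2 else 0) * (q + 1) + w * if 5 ∣ q - 1 then 2 else 0) := by
  have : Group.IsPerfect S :=
    haveI := isPerfect_alternatingGroup_five
    Group.IsPerfect.ofSurjective (f := e.symm.toMonoidHom) e.symm.surjective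
  obtain ⟨T, hT, ⟨f⟩, hTL⟩ := exists_specialUnitary_mulEquiv_map_prod_eq hLMl hgen
  have hcount := numOrbits_mul_of_specialUnitary_prod hF hT (f.trans e)
    (E := scalarGroup q L) inf_le_right
  rwa [hTL, natCard_scalarGroup, hZcard] at hcount

end OrbitCount

theorem stmt9 (h q w : ℕ) (hh : 1 ≤ h) (hq : q = 2 ^ h) (heven : Even h)
    (F : Type*) [Field F] [Fintype F] (hF : Fintype.card F = q ^ 2)
    (hw : w ∣ q + 1)
    (L : Subgroup (GL (Fin 3) F)) (hLMl : (L : Set (GL (Fin 3) F)) ⊆ MlSet q F)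
    (hZcard : Nat.card ((L : Set (GL (Fin 3) F)) ∩ ZSet q F : Set (GL (Fin 3) F)) = w)
    (S : Subgroup (GL (Fin 3) F))
    (hSiso : Nonempty (↥S ≃* alternatingGroup (Fin 5)))
    (hgen : L = Subgroup.closure
      ((S : Set (GL (Fin 3) F)) ∪ ((L : Set (GL (Fin 3) F)) ∩ ZSet q F)))
    (htriv : (S : Set (GL (Fin 3) F)) ∩ ((L : Set (GL (Fin 3) F)) ∩ ZSet q F) ⊆ {1}) :
    (5 ∣ q - 1 →
      (numOrbits L (hermitianPts q F) : ℚ)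
        = 2 + ((q : ℚ) - 16) / 60
          + ((q : ℚ) / 4) * (((q : ℚ) - 1) / 15) * (((q : ℚ) + 1) / (w : ℚ))) ∧
    (5 ∣ q + 1 → ¬ (5 ∣ w) →
      (numOrbits L (hermitianPts q F) : ℚ)
        = 1 + ((q : ℚ) - 4) / 60
          + ((q : ℚ) / 4) * (((q : ℚ) - 1) / 3) * (((q : ℚ) + 1) / (5 * (w : ℚ)))) ∧
    (5 ∣ w →
      (numOrbits L (hermitianPts q F) : ℚ)
        = 1 + ((q : ℚ) - 4) / 60
          + (((q : ℚ) + 1) / (w : ℚ)) * (1 + ((q : ℚ) ^ 2 - (q : ℚ) - 12) / 60)) := by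
  obtain ⟨e⟩ := hSiso
  have : CharP F 2 := charP_of_card_eq_prime_pow (by rw [hF, hq, ← pow_mul])
  rw [Fintype.card_eq_nat_card] at hF
  have h1 : 1 < q := one_lt_of_card_eq_sq hF
  have h3q : 3 ∣ q - 1 := by
    obtain ⟨k, rfl⟩ := heven.two_dvd
    simpa [hq, pow_mul] using Nat.sub_dvd_pow_sub_pow 4 1 k
  have h3w : ¬ 3 ∣ w := fun h => by have := h.trans hw; omega
  have hw0 : (w : ℚ) ≠ 0 := Nat.cast_ne_zero.2 (ne_zero_of_dvd_ne_zero q.succ_ne_zero hw)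
  have hcount := congrArg (Nat.cast (R := ℚ)) <|
    numOrbits_mul_of_mulEquiv_alternatingGroup_five hF e hLMl hZcard hgen
  rw [if_neg h3w, if_pos h3q] at hcount
  push_cast at hcount
  refine ⟨fun h5q => ?_, fun h5q h5w => ?_, fun h5w => ?_⟩
  · rw [if_neg fun h5w => by have := h5w.trans hw; omega, if_pos h5q] at hcount
    field_simp
    linear_combination 60 * hcount
  · rw [if_neg h5w, if_neg (by omega)] at hcount
    field_simp
    linear_combination 60 * hcount
  · rw [if_pos h5w, if_neg (by have := h5w.trans hw; omega)] at hcount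
    field_simp
    linear_combination hcount
end

section
/- Let T = {P, P₁, P₂} be a self-polar triangle containing the point P = (0:0:1). Let L̄ ≤ M_ℓ be a subgroup mapping T to itself such that the pointwise stabilizer L̄_T of T in L̄ has index 2 in L̄. Set w := |L̄ ∩ Z| and suppose |L̄| = 2tw. Then the quotient L̄/(L̄ ∩ Z) is isomorphic to the dihedral group of order 2t. -/
open Matrix

def hermForm (q : ℕ) {F : Type*} [Field F] (u v : Fin 3 → F) : F :=
  -(u 0 ^ q) * v 0 + u 1 ^ q * v 1 + u 2 ^ q * v 2

/-!
In a two-element orbit `{x, y}` of points of a projective space, the stabilizer `N` of `x` has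
index two and fixes `y` as well. An element of `N` scales representatives of `x` and `y` by two
factors, whose ratio is a character of `N`; its image, a finite group of units of a field, is
cyclic. An element that exchanges `x` and `y` scales both by the same factor when it is squared, so
modulo the kernel of the character every element outside `N` is an involution. A group in which
every element outside a cyclic subgroup of index two is an involution is dihedral.

For the triangle, `x` and `y` are the vertices other than `P`. They span the polar line `Z = 0` of
`P`, and an element of `M_ℓ` acts on that line by a scalar exactly when it belongs to `Z`.
-/

open scoped LinearAlgebra.Projectivization

lemma exists_not_of_natCard_eq_two_mul {α : Type*} {s : Set α} [Finite s] [Nonempty s]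
    {p : α → Prop} (h : Nat.card s = 2 * Nat.card {a : α | a ∈ s ∧ p a}) : ∃ a ∈ s, ¬ p a := by
  by_contra! hall
  have hs : {a : α | a ∈ s ∧ p a} = s := Set.ext fun a => and_iff_left_of_imp (hall a)
  rw [hs] at h
  have := Nat.card_pos (α := s)
  lia

section Dihedral

variable {G : Type*} [Group G]

/-- The universal property of the dihedral group: the homomorphism that restricts to `c` on the
rotations and sends the reflection `sr 0` to `s`. -/
def dihedralLift {n : ℕ} (c : Multiplicative (ZMod n) →* G) (s : G) (hs : s ^ 2 = 1)
    (hc : ∀ i, c i * s = s * (c i)⁻¹) : DihedralGroup n →* G :=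
  MonoidHom.mk'
    (fun
      | .r i => c (.ofAdd i)
      | .sr i => s * c (.ofAdd i)) <| by
    rintro (i | i) (j | j)
    · simp only [DihedralGroup.r_mul_r, ofAdd_add, map_mul]
    · simp only [DihedralGroup.r_mul_sr, sub_eq_neg_add, ofAdd_add, ofAdd_neg, map_mul, map_inv,
        ← mul_assoc, hc]
    · simp only [DihedralGroup.sr_mul_r, ofAdd_add, map_mul, mul_assoc]
    · simp only [DihedralGroup.sr_mul_sr, sub_eq_neg_add, ofAdd_add, ofAdd_neg, map_mul, map_inv]
      rw [mul_assoc s, ← mul_assoc _ s, hc, mul_assoc, ← mul_assoc s s, ← sq, hs, one_mul]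

lemma dihedralLift_injective {n : ℕ} {c : Multiplicative (ZMod n) →* G} {s : G} {hs : s ^ 2 = 1}
    {hc : ∀ i, c i * s = s * (c i)⁻¹} (hinj : Function.Injective c) (hsc : s ∉ c.range) :
    Function.Injective (dihedralLift c s hs hc) := by
  refine (injective_iff_map_eq_one _).2 ?_
  rintro (i | i) (hi : _ = 1)
  · exact congrArg DihedralGroup.r ((map_eq_one_iff c hinj).1 hi)
  · exact absurd ⟨_, (map_inv c _).trans (eq_inv_of_mul_eq_one_left hi).symm⟩ hsc

lemma dihedralLift_surjective {n : ℕ} {c : Multiplicative (ZMod n) →* G} {s : G} {hs : s ^ 2 = 1}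
    {hc : ∀ i, c i * s = s * (c i)⁻¹} (hcs : ∀ g ∉ c.range, s⁻¹ * g ∈ c.range) :
    Function.Surjective (dihedralLift c s hs hc) := by
  intro g
  by_cases hg : g ∈ c.range
  · obtain ⟨i, hi⟩ := hg
    exact ⟨.r i.toAdd, hi⟩
  · obtain ⟨i, hi⟩ := hcs g hg
    exact ⟨.sr i.toAdd, eq_inv_mul_iff_mul_eq.1 hi⟩

theorem nonempty_mulEquiv_dihedralGroup {C : Subgroup G} [hcyc : IsCyclic C] (hC : C.index = 2)
    (hsq : ∀ g ∉ C, g ^ 2 = 1) : Nonempty (G ≃* DihedralGroup (Nat.card C)) := by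
  obtain ⟨s, hs⟩ : ∃ s, s ∉ C := by
    by_contra! hall
    simp [(Subgroup.eq_top_iff' C).2 hall] at hC
  let e := zmodCyclicMulEquiv hcyc
  let c := C.subtype.comp e.toMonoidHom
  have hrange : c.range = C := by
    have he : e.toMonoidHom.range = ⊤ := MonoidHom.range_eq_top.2 e.surjective
    rw [MonoidHom.range_comp, he, ← MonoidHom.range_eq_map, Subgroup.range_subtype]
  have hconj (i) : c i * s = s * (c i)⁻¹ := by
    have hcs : (c i * s) ^ 2 = 1 :=
      hsq _ fun h => hs ((Subgroup.mul_mem_cancel_left C (e i).2).1 h)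
    have hs2 : s⁻¹ = s := inv_eq_of_mul_eq_one_left (by rw [← sq, hsq s hs])
    rw [eq_inv_of_mul_eq_one_left ((sq _).symm.trans hcs), _root_.mul_inv_rev, hs2]
  refine ⟨(MulEquiv.ofBijective (dihedralLift c s (hsq s hs) hconj) ⟨?_, ?_⟩).symm⟩
  · exact dihedralLift_injective (C.subtype_injective.comp e.injective) (by rwa [hrange])
  · refine dihedralLift_surjective fun g hg => ?_
    rw [hrange] at hg ⊢
    rw [Subgroup.mul_mem_iff_of_index_two hC, inv_mem_iff]
    exact iff_of_false hs hg

/-- Homomorphisms with the same kernel have isomorphic ranges. -/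
noncomputable def rangeEquivOfKerEq {H H' : Type*} [Group H] [Group H'] {f : G →* H} {g : G →* H'}
    (h : f.ker = g.ker) : f.range ≃* g.range :=
  (QuotientGroup.quotientKerEquivRange f).symm.trans <|
    (QuotientGroup.quotientMulEquivOfEq h).trans (QuotientGroup.quotientKerEquivRange g)

variable {U : Type*} [Group U] {N : Subgroup G}

lemma normal_map_subtype_ker (hN : N.index = 2) {χ : N →* U}
    (hχ : ∀ g ∉ N, χ ⟨g ^ 2, Subgroup.sq_mem_of_index_two hN g⟩ = 1) :
    (χ.ker.map N.subtype).Normal := by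
  have hsq {g} (hg : g ∉ N) : g ^ 2 ∈ χ.ker.map N.subtype := ⟨_, hχ g hg, rfl⟩
  refine ⟨fun k hk g => ?_⟩
  by_cases hg : g ∈ N
  · obtain ⟨k, hk, rfl⟩ := hk
    exact ⟨_, χ.normal_ker.conj_mem k hk ⟨g, hg⟩, rfl⟩
  · have hgk : g * k ∉ N := fun h =>
      hg ((Subgroup.mul_mem_cancel_right N (Subgroup.map_subtype_le _ hk)).1 h)
    have hconj : g * k * g⁻¹ = (g * k) ^ 2 * k⁻¹ * (g ^ 2)⁻¹ := by
      simp only [sq, _root_.mul_inv_rev, mul_assoc, mul_inv_cancel_left]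
    rw [hconj]
    exact mul_mem (mul_mem (hsq hgk) (inv_mem hk)) (inv_mem (hsq hg))

theorem exists_surjective_hom_dihedralGroup (hN : N.index = 2) (χ : N →* U) [IsCyclic χ.range]
    (hχ : ∀ g ∉ N, χ ⟨g ^ 2, Subgroup.sq_mem_of_index_two hN g⟩ = 1) :
    ∃ φ : G →* DihedralGroup (Nat.card χ.range),
      Function.Surjective φ ∧ φ.ker = χ.ker.map N.subtype := by
  set K := χ.ker.map N.subtype with hK
  have : K.Normal := normal_map_subtype_ker hN hχ
  let π := QuotientGroup.mk' K
  have hKN : π.ker ≤ N := (QuotientGroup.ker_mk' K).trans_le (Subgroup.map_subtype_le _)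
  have hker : (π.comp N.subtype).ker = χ.ker := by
    rw [← MonoidHom.comap_ker, QuotientGroup.ker_mk', hK,
      Subgroup.comap_map_eq_self_of_injective N.subtype_injective]
  have hrange : (π.comp N.subtype).range = N.map π := by
    rw [MonoidHom.range_comp, Subgroup.range_subtype]
  let e : N.map π ≃* χ.range := (MulEquiv.subgroupCongr hrange.symm).trans (rangeEquivOfKerEq hker)
  have : IsCyclic (N.map π) := isCyclic_of_surjective e.symm e.symm.surjective
  have hindex : (N.map π).index = 2 :=
    (Subgroup.index_map_eq N (QuotientGroup.mk'_surjective K) hKN).trans hN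
  obtain ⟨ψ⟩ := nonempty_mulEquiv_dihedralGroup hindex <| by
    rintro ⟨g⟩ hg
    exact (QuotientGroup.eq_one_iff (g ^ 2)).2
      ⟨_, hχ g fun h => hg (Subgroup.mem_map_of_mem π h), rfl⟩
  rw [← Nat.card_congr e.toEquiv]
  refine ⟨ψ.toMonoidHom.comp π, ψ.surjective.comp (QuotientGroup.mk'_surjective K), ?_⟩
  exact (MonoidHom.ker_mulEquiv_comp π ψ).trans (QuotientGroup.ker_mk' K)

lemma natCard_eq_of_surjective_dihedralGroup {n : ℕ} {φ : G →* DihedralGroup n}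
    (hφ : Function.Surjective φ) : Nat.card G = 2 * n * Nat.card φ.ker := by
  rw [← φ.ker.index_mul_card, Subgroup.index_ker, MonoidHom.range_eq_top.2 hφ, Subgroup.card_top,
    DihedralGroup.nat_card]

end Dihedral

section Pair

variable {G X : Type*} [Group G] [MulAction G X] {x y : X}

lemma mapsTo_smul_of_mapsTo_insert {g : G} {s : Set X} (hx : x ∉ s) (hfix : g • x = x)
    (h : Set.MapsTo (g • ·) (insert x s) (insert x s)) : Set.MapsTo (g • ·) s s := by
  intro z hz
  refine (h (Set.mem_insert_of_mem x hz)).resolve_left fun hzx => hx ?_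
  rwa [← MulAction.injective g (hzx.trans hfix.symm)]

lemma smul_eq_right_of_smul_eq_left (hne : x ≠ y) {g : G}
    (hpair : Set.MapsTo (g • ·) {x, y} {x, y}) (hg : g • x = x) : g • y = y :=
  mapsTo_smul_of_mapsTo_insert (s := {y}) hne hg hpair rfl

lemma smul_swap_of_smul_ne (hne : x ≠ y) {g : G} (hpair : Set.MapsTo (g • ·) {x, y} {x, y})
    (hg : g • x ≠ x) : g • x = y ∧ g • y = x := by
  have hgx : g • x = y := (hpair (Set.mem_insert x {y})).resolve_left hg
  refine ⟨hgx, (hpair (Set.mem_insert_of_mem x rfl)).resolve_right fun hgy => hne ?_⟩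
  exact MulAction.injective g (hgx.trans hgy.symm)

lemma index_stabilizer_eq_two (hne : x ≠ y) (hpair : ∀ g : G, Set.MapsTo (g • ·) {x, y} {x, y})
    (hmove : ∃ g : G, g • x ≠ x) : (MulAction.stabilizer G x).index = 2 := by
  obtain ⟨g, hg⟩ := hmove
  have horbit : MulAction.orbit G x = {x, y} := by
    refine (Set.range_subset_iff.2 fun g => hpair g (Set.mem_insert x {y})).antisymm ?_
    rintro z (rfl | rfl)
    · exact MulAction.mem_orbit_self z
    · exact ⟨g, (smul_swap_of_smul_ne hne (hpair g) hg).1⟩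
  rw [MulAction.index_stabilizer, horbit, Set.ncard_pair hne]

end Pair

section LinearAction

variable {G K V : Type*} [Group G] [Field K] [AddCommGroup V] [Module K V] [DistribMulAction G V]
  [SMulCommClass G K V]

lemma smul_eq_iff_exists_smul_rep {g : G} {x y : ℙ K V} :
    g • x = y ↔ ∃ a : Kˣ, g • x.rep = a • y.rep := by
  conv_lhs => rw [← x.mk_rep, ← y.mk_rep, Projectivization.smul_mk, Projectivization.mk_eq_mk_iff]
  exact exists_congr fun _ => eq_comm

lemma units_smul_rep_injective (x : ℙ K V) : Function.Injective fun a : Kˣ => a • x.rep :=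
  (smul_left_injective K x.rep_nonzero).comp Units.val_injective

lemma mul_smul_eq_units_smul {g h : G} {a b : Kˣ} {u v w : V} (hg : g • v = a • w)
    (hh : h • u = b • v) : (g * h) • u = (a * b) • w := by
  rw [mul_smul, hh, smul_comm, hg, smul_smul, mul_comm]

/-- The character of the stabilizer of the point `x` giving the factor by which an element scales
the representatives of `x`. -/
noncomputable def stabilizerScalar (x : ℙ K V) : MulAction.stabilizer G x →* Kˣ :=
  MonoidHom.mk' (fun g => (smul_eq_iff_exists_smul_rep.1 g.2).choose) fun g h => by
    have hgh := mul_smul_eq_units_smul (smul_eq_iff_exists_smul_rep.1 g.2).choose_spec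
      (smul_eq_iff_exists_smul_rep.1 h.2).choose_spec
    exact units_smul_rep_injective x
      ((smul_eq_iff_exists_smul_rep.1 (g * h).2).choose_spec.symm.trans hgh)

lemma stabilizerScalar_eq_iff {x : ℙ K V} {g : MulAction.stabilizer G x} {a : Kˣ} :
    stabilizerScalar x g = a ↔ (g : G) • x.rep = a • x.rep := by
  have hg : (g : G) • x.rep = stabilizerScalar x g • x.rep :=
    (smul_eq_iff_exists_smul_rep.1 g.2).choose_spec
  rw [hg]
  exact (units_smul_rep_injective x).eq_iff.symm

/-- The ratio of the factors by which an element of the stabilizer of `x` scales the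
representatives of `x` and `y`, for a point `y` that is fixed by this stabilizer. -/
noncomputable def scalarRatio {x y : ℙ K V}
    (h : MulAction.stabilizer G x ≤ MulAction.stabilizer G y) : MulAction.stabilizer G x →* Kˣ :=
  stabilizerScalar x / (stabilizerScalar y).comp (Subgroup.inclusion h)

lemma scalarRatio_eq_one_iff {x y : ℙ K V}
    {h : MulAction.stabilizer G x ≤ MulAction.stabilizer G y} {g : MulAction.stabilizer G x} :
    scalarRatio h g = 1 ↔
      ∃ a : Kˣ, (g : G) • x.rep = a • x.rep ∧ (g : G) • y.rep = a • y.rep := by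
  have hy {a : Kˣ} : stabilizerScalar y (Subgroup.inclusion h g) = a ↔
      (g : G) • y.rep = a • y.rep := stabilizerScalar_eq_iff
  simp only [scalarRatio, MonoidHom.div_apply, MonoidHom.comp_apply, div_eq_one, ← hy,
    ← stabilizerScalar_eq_iff, exists_eq_left']
  exact eq_comm

lemma exists_sq_smul_rep_of_swap {x y : ℙ K V} {g : G} (hx : g • x = y) (hy : g • y = x) :
    ∃ a : Kˣ, g ^ 2 • x.rep = a • x.rep ∧ g ^ 2 • y.rep = a • y.rep := by
  obtain ⟨a, ha⟩ := smul_eq_iff_exists_smul_rep.1 hx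
  obtain ⟨b, hb⟩ := smul_eq_iff_exists_smul_rep.1 hy
  rw [sq]
  exact ⟨a * b, mul_comm a b ▸ mul_smul_eq_units_smul hb ha, mul_smul_eq_units_smul ha hb⟩

theorem exists_surjective_hom_dihedralGroup_of_mapsTo_pair [Finite G] {x y : ℙ K V} (hne : x ≠ y)
    (hpair : ∀ g : G, Set.MapsTo (g • ·) {x, y} {x, y}) (hmove : ∃ g : G, g • x ≠ x) :
    ∃ (n : ℕ) (φ : G →* DihedralGroup n), Function.Surjective φ ∧
      ∀ g, φ g = 1 ↔ ∃ a : Kˣ, g • x.rep = a • x.rep ∧ g • y.rep = a • y.rep := by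
  have hle : MulAction.stabilizer G x ≤ MulAction.stabilizer G y := fun g =>
    smul_eq_right_of_smul_eq_left hne (hpair g)
  have : Finite (scalarRatio hle).range := Set.finite_range (scalarRatio hle)
  have : IsCyclic (scalarRatio hle).range := isCyclic_subgroup_units _
  obtain ⟨φ, hφ, hker⟩ := exists_surjective_hom_dihedralGroup
    (index_stabilizer_eq_two hne hpair hmove) (scalarRatio hle) fun g hg =>
      have hswap := smul_swap_of_smul_ne hne (hpair g) hg
      scalarRatio_eq_one_iff.2 (exists_sq_smul_rep_of_swap hswap.1 hswap.2)
  refine ⟨_, φ, hφ, fun g => ?_⟩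
  rw [← MonoidHom.mem_ker, hker]
  constructor
  · rintro ⟨g, hg, rfl⟩
    exact scalarRatio_eq_one_iff.1 hg
  · rintro ⟨a, hx, hy⟩
    exact ⟨⟨g, smul_eq_iff_exists_smul_rep.2 ⟨a, hx⟩⟩, scalarRatio_eq_one_iff.2 ⟨a, hx, hy⟩, rfl⟩

end LinearAction

section Hermitian

variable {F : Type*} [Field F] {q : ℕ}

lemma glAct_eq_smul (g : GL (Fin 3) F) (x : ℙ F (Fin 3 → F)) : glAct g x = g • x :=
  rfl

variable (F) in
/-- The point `(0 : 0 : 1)`, the vertex `P` of the self-polar triangles under consideration. -/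
def zAxisPoint : ℙ F (Fin 3 → F) :=
  Projectivization.mk F ![0, 0, 1] fun h => by simpa using congrFun h 2

lemma exists_smul_eq_rep_zAxisPoint : ∃ a : Fˣ, a • ![0, 0, 1] = (zAxisPoint F).rep :=
  Projectivization.exists_smul_eq_mk_rep F _ _

lemma hermForm_rep_zAxisPoint_eq_zero_iff (hq : q ≠ 0) {v : Fin 3 → F} :
    hermForm q (zAxisPoint F).rep v = 0 ↔ v 2 = 0 := by
  obtain ⟨a, ha⟩ := exists_smul_eq_rep_zAxisPoint (F := F)
  simp [hermForm, ← ha, hq, Units.smul_def]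

lemma zAxisPoint_ne {x : ℙ F (Fin 3 → F)} (hx : x.rep 2 = 0) : zAxisPoint F ≠ x := by
  obtain ⟨a, ha⟩ := exists_smul_eq_rep_zAxisPoint (F := F)
  rintro rfl
  simp [← ha, Units.smul_def] at hx

lemma smul_eq_of_coe_eq {g : GL (Fin 3) F} {a b c d : F}
    (hg : (g : Matrix (Fin 3) (Fin 3) F) = !![a, b, 0; c, d, 0; 0, 0, 1]) (v : Fin 3 → F) :
    g • v = ![a * v 0 + b * v 1, c * v 0 + d * v 1, v 2] := by
  rw [Units.smul_def, hg]
  ext i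
  fin_cases i <;> simp [Matrix.smul_eq_mulVec, Matrix.mulVec, dotProduct, Fin.sum_univ_three]

lemma smul_zAxisPoint {g : GL (Fin 3) F} (hg : g ∈ MlSet q F) :
    g • zAxisPoint F = zAxisPoint F := by
  obtain ⟨a, c, τ, -, -, hM⟩ := hg
  simp [zAxisPoint, smul_eq_of_coe_eq hM]

lemma det_rep_ne_zero {x y : ℙ F (Fin 3 → F)} (hne : x ≠ y) (hx : x.rep 2 = 0)
    (hy : y.rep 2 = 0) : x.rep 0 * y.rep 1 - x.rep 1 * y.rep 0 ≠ 0 := by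
  rw [← x.mk_rep, ← y.mk_rep, Ne, Projectivization.mk_eq_mk_iff_crossProduct_eq_zero] at hne
  contrapose! hne
  simp [cross_apply, hx, hy, hne]

lemma eq_zero_of_det_ne_zero {p r : F} {u v : Fin 3 → F} (hd : u 0 * v 1 - u 1 * v 0 ≠ 0)
    (hu : p * u 0 + r * u 1 = 0) (hv : p * v 0 + r * v 1 = 0) : p = 0 ∧ r = 0 := by
  constructor <;> refine (mul_eq_zero.1 ?_).resolve_right hd
  · linear_combination v 1 * hu - u 1 * hv
  · linear_combination u 0 * hv - v 0 * hu

lemma exists_smul_eq_of_mem_ZSet {g : GL (Fin 3) F} (hg : g ∈ ZSet q F) :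
    ∃ a : Fˣ, ∀ v : Fin 3 → F, v 2 = 0 → g • v = a • v := by
  obtain ⟨ε, hε, hM⟩ := hg
  have hε0 : ε ≠ 0 := ne_zero_pow q.succ_ne_zero (hε.trans_ne one_ne_zero)
  refine ⟨Units.mk0 ε hε0, fun v hv => ?_⟩
  rw [Units.smul_def, hM]
  ext i
  fin_cases i <;> simp [Matrix.smul_eq_mulVec, Matrix.mulVec_diagonal, Units.smul_def, hv]

lemma mem_ZSet_of_smul_rep_eq (hq : q ≠ 0) {g : GL (Fin 3) F} (hg : g ∈ MlSet q F)
    {x y : ℙ F (Fin 3 → F)} (hne : x ≠ y) (hx : x.rep 2 = 0) (hy : y.rep 2 = 0) {ε : F}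
    (hgx : g • x.rep = ε • x.rep) (hgy : g • y.rep = ε • y.rep) : g ∈ ZSet q F := by
  obtain ⟨a, c, τ, hac, -, hM⟩ := hg
  have hrows {v : Fin 3 → F} (hgv : g • v = ε • v) :
      (a - ε) * v 0 + τ * c ^ q * v 1 = 0 ∧ c * v 0 + (τ * a ^ q - ε) * v 1 = 0 := by
    rw [smul_eq_of_coe_eq hM] at hgv
    have h0 : a * v 0 + τ * c ^ q * v 1 = ε * v 0 := congrFun hgv 0
    have h1 : c * v 0 + τ * a ^ q * v 1 = ε * v 1 := congrFun hgv 1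
    exact ⟨by linear_combination h0, by linear_combination h1⟩
  have hd := det_rep_ne_zero hne hx hy
  obtain ⟨ha, -⟩ := eq_zero_of_det_ne_zero hd (hrows hgx).1 (hrows hgy).1
  obtain ⟨rfl, hτ⟩ := eq_zero_of_det_ne_zero hd (hrows hgx).2 (hrows hgy).2
  refine ⟨a, by simpa using hac, ?_⟩
  rw [hM, sub_eq_zero.1 hτ, ← sub_eq_zero.1 ha]
  ext i j
  fin_cases i <;> fin_cases j <;> simp [hq]

lemma mem_ZSet_iff_exists_smul_rep (hq : q ≠ 0) {g : GL (Fin 3) F} (hg : g ∈ MlSet q F)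
    {x y : ℙ F (Fin 3 → F)} (hne : x ≠ y) (hx : x.rep 2 = 0) (hy : y.rep 2 = 0) :
    g ∈ ZSet q F ↔ ∃ a : Fˣ, g • x.rep = a • x.rep ∧ g • y.rep = a • y.rep := by
  constructor
  · intro hgZ
    obtain ⟨a, ha⟩ := exists_smul_eq_of_mem_ZSet hgZ
    exact ⟨a, ha _ hx, ha _ hy⟩
  · rintro ⟨a, hgx, hgy⟩
    exact mem_ZSet_of_smul_rep_eq hq hg hne hx hy hgx hgy

end Hermitian

theorem stmt12_general {F : Type*} [Field F] {q t w : ℕ} (hq : q ≠ 0)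
    {P₁ P₂ : ℙ F (Fin 3 → F)} (hne : P₁ ≠ P₂)
    (h₁ : hermForm q (zAxisPoint F).rep P₁.rep = 0)
    (h₂ : hermForm q (zAxisPoint F).rep P₂.rep = 0)
    {L : Subgroup (GL (Fin 3) F)} [Finite L] (hLMl : (L : Set (GL (Fin 3) F)) ⊆ MlSet q F)
    (hstab : ∀ g ∈ L, ∀ x ∈ ({zAxisPoint F, P₁, P₂} : Set (ℙ F (Fin 3 → F))),
      glAct g x ∈ ({zAxisPoint F, P₁, P₂} : Set (ℙ F (Fin 3 → F))))
    (hindex : Nat.card L = 2 * Nat.card {g : GL (Fin 3) F | g ∈ L ∧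
      ∀ x ∈ ({zAxisPoint F, P₁, P₂} : Set (ℙ F (Fin 3 → F))), glAct g x = x})
    (hZ : Nat.card ((L : Set (GL (Fin 3) F)) ∩ ZSet q F : Set (GL (Fin 3) F)) = w)
    (hL : Nat.card L = 2 * t * w) :
    ∃ φ : L →* DihedralGroup t, Function.Surjective φ ∧
      ∀ x : L, φ x = 1 ↔ (x : GL (Fin 3) F) ∈ ZSet q F := by
  rw [hermForm_rep_zAxisPoint_eq_zero_iff hq] at h₁ h₂
  simp only [glAct_eq_smul] at hstab hindex
  have hP : zAxisPoint F ∉ ({P₁, P₂} : Set (ℙ F (Fin 3 → F))) := by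
    rintro (h | h)
    exacts [zAxisPoint_ne h₁ h, zAxisPoint_ne h₂ h]
  have hpair (g : L) : Set.MapsTo (g • ·) ({P₁, P₂} : Set (ℙ F (Fin 3 → F))) {P₁, P₂} :=
    mapsTo_smul_of_mapsTo_insert hP (smul_zAxisPoint (hLMl g.2)) (hstab g g.2)
  have hmove : ∃ g : L, g • P₁ ≠ P₁ := by
    obtain ⟨g, hg, hfix⟩ := exists_not_of_natCard_eq_two_mul (s := SetLike.coe L) hindex
    refine ⟨⟨g, hg⟩, fun hg₁ => hfix ?_⟩
    rintro x (rfl | rfl | rfl)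
    exacts [smul_zAxisPoint (hLMl hg), hg₁,
      smul_eq_right_of_smul_eq_left hne (hpair ⟨g, hg⟩) hg₁]
  obtain ⟨n, φ, hφ, hker⟩ := exists_surjective_hom_dihedralGroup_of_mapsTo_pair hne hpair hmove
  have hφZ (g : L) : φ g = 1 ↔ (g : GL (Fin 3) F) ∈ ZSet q F :=
    (hker g).trans (mem_ZSet_iff_exists_smul_rep hq (hLMl g.2) hne h₁ h₂).symm
  have hw : Nat.card φ.ker = w := by
    rw [← hZ, ← Subtype.image_preimage_coe, Nat.card_image_of_injective Subtype.val_injective]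
    exact Nat.card_congr (Equiv.subtypeEquivRight hφZ)
  obtain rfl : n = t := by
    have hcard := natCard_eq_of_surjective_dihedralGroup hφ
    rw [hw, hL, mul_assoc, mul_assoc] at hcard
    exact (Nat.eq_of_mul_eq_mul_right (hw ▸ Nat.card_pos)
      (Nat.eq_of_mul_eq_mul_left two_pos hcard)).symm
  exact ⟨φ, hφ, hφZ⟩

theorem stmt12 (h q t w : ℕ) (hh : 1 ≤ h) (hq : q = 2 ^ h)
    (F : Type*) [Field F] [Fintype F] (hF : Fintype.card F = q ^ 2)
    (P P₁ P₂ : Projectivization F (Fin 3 → F))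
    (hP : P = Projectivization.mk F (![0, 0, 1] : Fin 3 → F)
      (by intro hcon; have h2 := congrFun hcon 2; simp at h2))
    (hne01 : P ≠ P₁) (hne02 : P ≠ P₂) (hne12 : P₁ ≠ P₂)
    (hselfpolar : (∀ x ∈ ({P, P₁, P₂} : Set (Projectivization F (Fin 3 → F))),
        hermForm q x.rep x.rep ≠ 0) ∧
      (∀ x ∈ ({P, P₁, P₂} : Set (Projectivization F (Fin 3 → F))),
        ∀ y ∈ ({P, P₁, P₂} : Set (Projectivization F (Fin 3 → F))),
          x ≠ y → hermForm q x.rep y.rep = 0))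
    (L : Subgroup (GL (Fin 3) F)) (hLMl : (L : Set (GL (Fin 3) F)) ⊆ MlSet q F)
    (hstab : ∀ g ∈ L, ∀ x ∈ ({P, P₁, P₂} : Set (Projectivization F (Fin 3 → F))),
      glAct g x ∈ ({P, P₁, P₂} : Set (Projectivization F (Fin 3 → F))))
    (hindex2 : Nat.card ↥L = 2 * Nat.card
      {g : GL (Fin 3) F | g ∈ L ∧
        ∀ x ∈ ({P, P₁, P₂} : Set (Projectivization F (Fin 3 → F))), glAct g x = x})
    (hZcard : Nat.card ((L : Set (GL (Fin 3) F)) ∩ ZSet q F : Set (GL (Fin 3) F)) = w)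
    (hLcard : Nat.card ↥L = 2 * t * w) :
    ∃ φ : ↥L →* DihedralGroup t, Function.Surjective φ ∧
      ∀ x : ↥L, φ x = 1 ↔ (x : GL (Fin 3) F) ∈ ZSet q F := by
  obtain rfl : P = zAxisPoint F := hP
  exact stmt12_general (hq ▸ (Nat.two_pow_pos h).ne') hne12
    (hselfpolar.2 _ (by simp) P₁ (by simp) hne01) (hselfpolar.2 _ (by simp) P₂ (by simp) hne02)
    hLMl hstab hindex2 hZcard hLcard
end
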